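/- Every language recognized by an L◇ grammar is context-free. -/

import Mathlib

/-- Types of the bracketed Lambek calculus. -/
inductive PTy where
  | prim : ℕ → PTy
  | ldiv : PTy → PTy → PTy   -- ldiv A B = A \ B
  | rdiv : PTy → PTy → PTy   -- rdiv B A = B / A
  | mul  : PTy → PTy → PTy
  | dia  : PTy → PTy
  | box  : PTy → PTy
deriving DecidableEq

/-- Type trees: leaves labeled by types, internal nodes are brackets. -/
inductive PTree where
  | leaf : PTy → PTree
  | node : List PTree → PTree

abbrev PHedge := List PTree

/-- Contexts: a hedge with one distinguished hole. -/
inductive PCtx where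
  | hole : PHedge → PHedge → PCtx
  | brk  : PCtx → PHedge → PHedge → PCtx

/-- Substitution of a hedge for the hole of a context. -/
def PCtx.plug : PCtx → PHedge → PHedge
  | .hole pre post, D => pre ++ D ++ post
  | .brk c pre post, D => pre ++ (PTree.node (c.plug D) :: post)

/-- All primitive types occurring in the type belong to `B`. -/
def PTy.over (B : Finset ℕ) : PTy → Prop
  | .prim p => p ∈ B
  | .ldiv A C => A.over B ∧ C.over B
  | .rdiv C A => C.over B ∧ A.over B
  | .mul A C => A.over B ∧ C.over B
  | .dia A => A.over B
  | .box A => A.over B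

/-- Length of a type. -/
def lenP : PTy → ℕ
  | .prim _ => 1
  | .ldiv A B => lenP A + lenP B
  | .rdiv B A => lenP B + lenP A
  | .mul A B => lenP A + lenP B
  | .dia A => lenP A + 2
  | .box A => lenP A + 2

mutual
/-- The yield of a tree: the sequence of types labeling its leaves. -/
def yieldTree : PTree → List PTy
  | .leaf A => [A]
  | .node ts => yieldHedge ts
/-- The yield of a hedge. -/
def yieldHedge : List PTree → List PTy
  | [] => []
  | t :: ts => yieldTree t ++ yieldHedge ts
end
/-- L◇ : the Lambek calculus with brackets
(the antecedent must be nonempty in the right rules for the divisions). -/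
inductive PProv : PHedge → PTy → Prop where
  | id (p) : PProv [.leaf (.prim p)] (.prim p)
  | ldivL (G : PHedge) (D : PCtx) (A B C) :
      PProv G A → PProv (D.plug [.leaf B]) C →
      PProv (D.plug (G ++ [.leaf (.ldiv A B)])) C
  | ldivR (Pi : PHedge) (A B) : Pi ≠ [] →
      PProv (.leaf A :: Pi) B → PProv Pi (.ldiv A B)
  | rdivL (G : PHedge) (D : PCtx) (A B C) :
      PProv G A → PProv (D.plug [.leaf B]) C →
      PProv (D.plug (.leaf (.rdiv B A) :: G)) C
  | rdivR (Pi : PHedge) (A B) : Pi ≠ [] →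
      PProv (Pi ++ [.leaf A]) B → PProv Pi (.rdiv B A)
  | mulL (G : PCtx) (A B C) :
      PProv (G.plug [.leaf A, .leaf B]) C → PProv (G.plug [.leaf (.mul A B)]) C
  | mulR (G D : PHedge) (A B) :
      PProv G A → PProv D B → PProv (G ++ D) (.mul A B)
  | diaL (G : PCtx) (A B) :
      PProv (G.plug [.node [.leaf A]]) B → PProv (G.plug [.leaf (.dia A)]) B
  | diaR (G : PHedge) (A) :
      PProv G A → PProv [.node G] (.dia A)
  | boxL (G : PCtx) (A B) :
      PProv (G.plug [.leaf A]) B → PProv (G.plug [.node [.leaf (.box A)]]) B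
  | boxR (G : PHedge) (A) :
      PProv [.node G] A → PProv G (.box A)
  | cut (G : PHedge) (D : PCtx) (A B) :
      PProv G A → PProv (D.plug [.leaf A]) B → PProv (D.plug G) B

/-- The language generated by the L◇ grammar `(Σ, I, Dt)`: a word `w` is generated iff
there is an L◇-provable sequent `Γ ⇒ Dt` whose yield is `A_1 ⋯ A_n` with
`(w_i, A_i) ∈ I` for each `i`. -/
def grammarLang {Sig : Type} (I : Finset (Sig × PTy)) (Dt : PTy) : Language Sig :=
  {w | ∃ (G : PHedge) (l : List (Sig × PTy)),
        PProv G Dt ∧ (∀ x ∈ l, x ∈ I) ∧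
        w = l.map Prod.fst ∧ yieldHedge G = l.map Prod.snd}


namespace LD

/-- Labelled types. -/
inductive Ty (α : Type) where
  | prim : α → Ty α
  | ldiv : Ty α → Ty α → Ty α
  | rdiv : Ty α → Ty α → Ty α
  | mul : Ty α → Ty α → Ty α
  | dia : α → Ty α → Ty α
  | box : α → Ty α → Ty α

/-- Symbols of linearised hedges. -/
inductive Sy (α : Type) where
  | ty : Ty α → Sy α
  | op : α → Sy α
  | cl : Sy α

open Ty Sy

/-- Height of a string. -/
def ht {α : Type} : List (Sy α) → ℤ
  | [] => 0
  | ty _ :: l => ht l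
  | op _ :: l => ht l + 1
  | cl :: l => ht l - 1

/-- Minimal prefix height. -/
def mn {α : Type} : List (Sy α) → ℤ
  | [] => 0
  | ty _ :: l => min 0 (mn l)
  | op _ :: l => min 0 (mn l + 1)
  | cl :: l => min 0 (mn l - 1)

section
variable {α : Type}

@[simp] theorem ht_nil : ht ([] : List (Sy α)) = 0 := rfl
@[simp] theorem ht_ty (A : Ty α) (l) : ht (ty A :: l) = ht l := rfl
@[simp] theorem ht_op (a : α) (l) : ht (op a :: l) = ht l + 1 := rfl
@[simp] theorem ht_cl (l : List (Sy α)) : ht (cl :: l) = ht l - 1 := rfl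
@[simp] theorem mn_nil : mn ([] : List (Sy α)) = 0 := rfl
@[simp] theorem mn_op (a : α) (l) : mn (op a :: l) = min 0 (mn l + 1) := rfl
@[simp] theorem mn_cl (l : List (Sy α)) : mn (cl :: l) = min 0 (mn l - 1) := rfl

theorem mn_le (l : List (Sy α)) : mn l ≤ 0 := by
  cases l with
  | nil => simp
  | cons x l => cases x <;> simp [mn]

@[simp] theorem min_mn (l : List (Sy α)) : min 0 (mn l) = mn l := min_eq_right (mn_le l)
@[simp] theorem min_mn' (l : List (Sy α)) : min (mn l) 0 = mn l := min_eq_left (mn_le l)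
@[simp] theorem mn_ty (A : Ty α) (l) : mn (ty A :: l) = mn l := by simp [mn]

theorem mn_le_ht (l : List (Sy α)) : mn l ≤ ht l := by
  induction l with
  | nil => simp
  | cons x l ih => cases x <;> simp <;> omega

@[simp] theorem ht_append (l k : List (Sy α)) : ht (l ++ k) = ht l + ht k := by
  induction l with
  | nil => simp
  | cons x l ih => cases x <;> simp [ih] <;> omega

@[simp] theorem mn_append (l k : List (Sy α)) : mn (l ++ k) = min (mn l) (ht l + mn k) := by
  induction l with
  | nil => simp [mn_le]
  | cons x l ih => cases x <;> simp [ih] <;> omega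

/-- Balanced strings. -/
def Bal (l : List (Sy α)) : Prop := ht l = 0 ∧ mn l = 0

/-- Cut-free labelled calculus on strings. -/
inductive Prv : List (Sy α) → Ty α → Prop where
  | id (p) : Prv [ty (prim p)] (prim p)
  | ldivL (G X Y : List (Sy α)) (A B C) : Prv G A → Prv (X ++ ty B :: Y) C →
      Prv (X ++ (G ++ ty (ldiv A B) :: Y)) C
  | ldivR (G : List (Sy α)) (A B) : G ≠ [] → Prv (ty A :: G) B → Prv G (ldiv A B)
  | rdivL (G X Y : List (Sy α)) (A B C) : Prv G A → Prv (X ++ ty B :: Y) C →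
      Prv (X ++ ty (rdiv B A) :: (G ++ Y)) C
  | rdivR (G : List (Sy α)) (A B) : G ≠ [] → Prv (G ++ [ty A]) B → Prv G (rdiv B A)
  | mulL (X Y : List (Sy α)) (A B C) : Prv (X ++ ty A :: ty B :: Y) C →
      Prv (X ++ ty (mul A B) :: Y) C
  | mulR (G D : List (Sy α)) (A B) : Prv G A → Prv D B → Prv (G ++ D) (mul A B)
  | diaL (X Y : List (Sy α)) (i A C) : Prv (X ++ op i :: ty A :: cl :: Y) C →
      Prv (X ++ ty (dia i A) :: Y) C
  | diaR (G : List (Sy α)) (i A) : Prv G A → Prv (op i :: (G ++ [cl])) (dia i A)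
  | boxL (X Y : List (Sy α)) (i A C) : Prv (X ++ ty A :: Y) C →
      Prv (X ++ op i :: ty (box i A) :: cl :: Y) C
  | boxR (G : List (Sy α)) (i A) : G ≠ [] → Bal G → Prv (op i :: (G ++ [cl])) A →
      Prv G (box i A)

theorem Prv.ne {G : List (Sy α)} {C} (h : Prv G C) : G ≠ [] := by
  induction h <;> simp_all

theorem Prv.bal {G : List (Sy α)} {C} (h : Prv G C) : Bal G := by
  unfold Bal
  induction h with
  | id p => simp
  | ldivL G X Y A B C _ _ h1 h2 | rdivL G X Y A B C _ _ h1 h2 =>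
    simp at h1 h2 ⊢
    have := mn_le G; have := mn_le X; have := mn_le Y
    omega
  | ldivR G A B _ _ h | rdivR G A B _ _ h =>
    simp at h ⊢
    have := mn_le G
    omega
  | mulL X Y A B C _ h => simpa using h
  | mulR G D A B _ _ h1 h2 => simp; omega
  | diaL X Y i A C _ h | boxL X Y i A C _ h =>
    simp at h ⊢
    have := mn_le X; have := mn_le Y
    omega
  | diaR G i A _ h => simp; omega
  | boxR G i A _ h _ _ => exact h

/-- A bracketed balanced string has no balanced proper prefix. -/
theorem irr {i : α} {D U V : List (Sy α)} (hD : Bal D) (h : op i :: (D ++ [cl]) = U ++ V)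
    (hU : ht U = 0) : U = [] ∨ V = [] := by
  rcases U with _ | ⟨x, U⟩
  · simp
  · right
    rcases List.eq_nil_or_concat V with rfl | ⟨V, y, rfl⟩
    · rfl
    · exfalso
      simp only [List.cons_append, List.cons.injEq] at h
      obtain ⟨rfl, h⟩ := h
      rw [List.concat_eq_append, ← List.append_assoc] at h
      have h2 := List.append_inj_left' h (by simp)
      subst h2
      simp [Bal] at hD hU
      have := mn_le_ht U
      omega

theorem split1 {β : Type} {X D Y D1 D2 : List β} {s : β} (h : D1 ++ s :: D2 = X ++ (D ++ Y)) :
    (∃ Y', D1 = X ++ (D ++ Y') ∧ Y = Y' ++ s :: D2) ∨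
    (∃ a b, D1 = X ++ a ∧ D = a ++ s :: b ∧ D2 = b ++ Y) ∨
    (∃ X', X = D1 ++ s :: X' ∧ D2 = X' ++ (D ++ Y)) := by
  rcases List.append_eq_append_iff.1 h with ⟨a, rfl, h2⟩ | ⟨a, rfl, h2⟩
  · rcases a with _ | ⟨x, a⟩
    · simp at h2
      rcases D with _ | ⟨y, D⟩
      · left; exact ⟨[], by simp, by simpa using h2.symm⟩
      · simp at h2; right; left; exact ⟨[], D, by simp, by simp [h2], h2.2⟩
    · simp at h2; right; right; exact ⟨a, by simp [h2], h2.2⟩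
  · rcases List.append_eq_append_iff.1 h2 with ⟨b, rfl, h3⟩ | ⟨b, rfl, h3⟩
    · left; exact ⟨b, by simp, h3⟩
    · rcases b with _ | ⟨x, b⟩
      · simp at h3; left; exact ⟨[], by simp, by simp [h3]⟩
      · simp at h3; right; left; exact ⟨a, b, rfl, by simp [h3], h3.2⟩
end
section
variable {α : Type}

theorem Prv.idt (A : Ty α) : Prv [ty A] A := by
  induction A with
  | prim p => exact .id p
  | ldiv A B h1 h2 =>
    refine .ldivR _ _ _ (by simp) ?_
    simpa using Prv.ldivL [ty A] [] [] A B B h1 h2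
  | rdiv B A h2 h1 =>
    refine .rdivR _ _ _ (by simp) ?_
    simpa using Prv.rdivL [ty A] [] [] A B B h1 h2
  | mul A B h1 h2 =>
    simpa using Prv.mulL [] [] A B _ (by simpa using Prv.mulR _ _ _ _ h1 h2)
  | dia i A h =>
    simpa using Prv.diaL [] [] i A _ (by simpa using Prv.diaR _ i _ h)
  | box i A h =>
    exact .boxR _ _ _ (by simp) (by simp [Bal]) (by simpa using Prv.boxL [] [] i A _ h)

theorem bal_swap {X D Y D' : List (Sy α)} (h : Bal (X ++ (D ++ Y))) (h1 : Bal D) (h2 : Bal D') :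
    Bal (X ++ (D' ++ Y)) := by
  simp [Bal] at *
  have := mn_le X
  have := mn_le Y
  omega

theorem bal_ty (A : Ty α) : Bal [ty A] := by simp [Bal]

/-- A type symbol inside a bracketed segment. -/
theorem seg_ty {i : α} {A : Ty α} {D a b : List (Sy α)} (h : op i :: (D ++ [cl]) = a ++ ty A :: b) :
    ∃ a' b', a = op i :: a' ∧ b = b' ++ [cl] ∧ D = a' ++ ty A :: b' := by
  rcases a with _ | ⟨x, a⟩
  · simp at h
  rcases List.eq_nil_or_concat b with rfl | ⟨b, y, rfl⟩
  · simp only [List.cons_append, List.cons.injEq] at h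
    have := List.append_inj_right' h.2 (by simp)
    simp at this
  · simp only [List.cons_append, List.cons.injEq, List.concat_eq_append] at h
    obtain ⟨rfl, h⟩ := h
    have h' : D ++ [cl] = (a ++ ty A :: b) ++ [y] := by simpa using h
    have h1 := List.append_inj_left' h' (by simp)
    have h2 := List.append_inj_right' h' (by simp)
    simp at h2
    subst h1 h2
    exact ⟨a, b, rfl, by simp, rfl⟩

theorem seg_blk {i : α} {D L R X Y : List (Sy α)} (hD : Bal D) (hb : Bal L ∨ Bal R)
    (h : L ++ R = X ++ (op i :: (D ++ [cl]) ++ Y)) :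
    (∃ Y', L = X ++ (op i :: (D ++ [cl]) ++ Y') ∧ Y = Y' ++ R) ∨
    (∃ X', X = L ++ X' ∧ R = X' ++ (op i :: (D ++ [cl]) ++ Y)) := by
  rcases List.append_eq_append_iff.1 h with ⟨a, h1, h2⟩ | ⟨a, h1, h2⟩
  · right; exact ⟨a, h1, h2⟩
  · rcases List.append_eq_append_iff.1 h2 with ⟨b, h3, h4⟩ | ⟨b, h3, h4⟩
    · left; exact ⟨b, by rw [h1, h3], h4⟩
    · have hs : ht a + ht b = 0 := by
        have := congrArg ht h3
        simp [hD.1] at this; omega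
      have hm : mn (a ++ b) = 0 := by rw [← h3]; simp [hD.1, hD.2]
      have ha : ht a = 0 := by
        simp at hm
        have := mn_le_ht a
        have := mn_le_ht b
        have := mn_le a
        have := mn_le b
        subst h1 h4
        rcases hb with hb | hb <;> simp [Bal] at hb <;> omega
      rcases irr hD h3 ha with rfl | rfl
      · right; exact ⟨[], by simpa using h1.symm, by rw [h4, h3]; simp⟩
      · left; exact ⟨[], by rw [h1, h3]; simp, by simpa using h4.symm⟩

/-- Bracketed segments of provable sequents can be replaced by subtypes. -/
theorem jager (S : Ty α → Prop)
    (s1 : ∀ A B, S (ldiv A B) → S A ∧ S B) (s2 : ∀ A B, S (rdiv A B) → S A ∧ S B)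
    (s3 : ∀ A B, S (mul A B) → S A ∧ S B) (s4 : ∀ i A, S (dia i A) → S A)
    (s5 : ∀ i A, S (box i A) → S A)
    {G : List (Sy α)} {C : Ty α} (h : Prv G C) : ∀ X i D Y,
    G = X ++ (op i :: (D ++ [cl]) ++ Y) → Bal D → (∀ A, ty A ∈ G → S A) → S C →
    ∃ E F, Prv D E ∧ S E ∧ S F ∧ Prv [op i, ty E, cl] F ∧ Prv (X ++ ty F :: Y) C := by
  induction h with
  | id p =>
    intro X i D Y he
    have := congrArg List.length he
    simp at this; omega
  | ldivL G X0 Y0 A B C h1 h2 ih1 ih2 =>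
    intro X i D Y he hD hS hC
    have hsub := s1 A B (hS _ (by simp))
    have hS2 : ∀ A', ty A' ∈ X0 ++ ty B :: Y0 → S A' := by
      intro A' h
      simp at h
      rcases h with h | rfl | h
      · exact hS _ (by simp [h])
      · exact hsub.2
      · exact hS _ (by simp [h])
    have hS1 : ∀ A', ty A' ∈ G → S A' := fun A' h => hS _ (by simp [h])
    have hG := h1.bal
    rw [← List.append_assoc] at he
    rcases split1 he with ⟨Y', e1, rfl⟩ | ⟨a, b, e1, e2, rfl⟩ | ⟨X', rfl, rfl⟩
    · rcases seg_blk hD (.inr hG) e1 with ⟨Y'', rfl, rfl⟩ | ⟨X', rfl, rfl⟩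
      · obtain ⟨E, F, a1, a2, a3, a4, a5⟩ := ih2 X i D (Y'' ++ ty B :: Y0) (by simp) hD hS2 hC
        exact ⟨E, F, a1, a2, a3, a4, by
          simpa using Prv.ldivL G (X ++ ty F :: Y'') Y0 A B C h1 (by simpa using a5)⟩
      · obtain ⟨E, F, a1, a2, a3, a4, a5⟩ := ih1 X' i D Y' (by simp) hD hS1 hsub.1
        exact ⟨E, F, a1, a2, a3, a4, by
          simpa using Prv.ldivL (X' ++ ty F :: Y') X0 Y0 A B C a5 h2⟩
    · obtain ⟨a', b', rfl, rfl, rfl⟩ := seg_ty e2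
      rcases List.append_eq_append_iff.1 e1 with ⟨g, rfl, rfl⟩ | ⟨g, rfl, e3⟩
      · exfalso
        simp [Bal] at hD hG
        have := mn_le_ht g; have := mn_le_ht a'
        omega
      · rcases g with _ | ⟨x, g⟩
        · exfalso
          simp at e3
          subst e3
          simp [Bal] at hD hG
          have := mn_le_ht a'
          omega
        · simp at e3
          obtain ⟨rfl, rfl⟩ := e3
          obtain ⟨E, F, a1, a2, a3, a4, a5⟩ := ih2 X i (g ++ ty B :: b') Y (by simp) (by
            simp [Bal] at hD hG ⊢; have := mn_le b'; have := mn_le g; omega) hS2 hC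
          exact ⟨E, F, by simpa using Prv.ldivL G g b' A B E h1 a1, a2, a3, a4, a5⟩
    · obtain ⟨E, F, a1, a2, a3, a4, a5⟩ := ih2 (X0 ++ ty B :: X') i D Y (by simp) hD hS2 hC
      exact ⟨E, F, a1, a2, a3, a4, by
        simpa using Prv.ldivL G X0 (X' ++ ty F :: Y) A B C h1 (by simpa using a5)⟩
  | rdivL G X0 Y0 A B C h1 h2 ih1 ih2 =>
    intro X i D Y he hD hS hC
    have hsub := s2 B A (hS _ (by simp))
    have hS2 : ∀ A', ty A' ∈ X0 ++ ty B :: Y0 → S A' := by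
      intro A' h
      simp at h
      rcases h with h | rfl | h
      · exact hS _ (by simp [h])
      · exact hsub.1
      · exact hS _ (by simp [h])
    have hS1 : ∀ A', ty A' ∈ G → S A' := fun A' h => hS _ (by simp [h])
    have hG := h1.bal
    rcases split1 he with ⟨Y', rfl, rfl⟩ | ⟨a, b, rfl, e2, e1⟩ | ⟨X', rfl, e1⟩
    · obtain ⟨E, F, a1, a2, a3, a4, a5⟩ := ih2 X i D (Y' ++ ty B :: Y0) (by simp) hD hS2 hC
      exact ⟨E, F, a1, a2, a3, a4, by
        simpa using Prv.rdivL G (X ++ ty F :: Y') Y0 A B C h1 (by simpa using a5)⟩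
    · obtain ⟨a', b', rfl, rfl, rfl⟩ := seg_ty e2
      rcases List.append_eq_append_iff.1 e1 with ⟨g, e3, rfl⟩ | ⟨g, rfl, rfl⟩
      · rcases List.eq_nil_or_concat g with rfl | ⟨g, x, rfl⟩
        · exfalso
          simp at e3
          subst e3
          simp [Bal] at hD hG
          have := mn_le_ht a'
          omega
        · rw [List.concat_eq_append, ← List.append_assoc] at e3
          have e4 := List.append_inj_left' e3 (by simp)
          have e5 := List.append_inj_right' e3 (by simp)
          simp at e5
          subst e4 e5
          obtain ⟨E, F, a1, a2, a3, a4, a5⟩ := ih2 X i (a' ++ ty B :: g) Y (by simp) (by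
            simp [Bal] at hD hG ⊢; have := mn_le a'; have := mn_le g; omega) hS2 hC
          exact ⟨E, F, by simpa using Prv.rdivL G a' g A B E h1 a1, a2, a3, a4, a5⟩
      · exfalso
        simp [Bal] at hD hG
        have := mn_le_ht a'; have := mn_le_ht b'; have := mn_le g
        omega
    · rcases seg_blk hD (.inl hG) e1 with ⟨Y', rfl, rfl⟩ | ⟨X'', rfl, rfl⟩
      · obtain ⟨E, F, a1, a2, a3, a4, a5⟩ := ih1 X' i D Y' (by simp) hD hS1 hsub.2
        exact ⟨E, F, a1, a2, a3, a4, by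
          simpa using Prv.rdivL (X' ++ ty F :: Y') X0 Y0 A B C a5 h2⟩
      · obtain ⟨E, F, a1, a2, a3, a4, a5⟩ := ih2 (X0 ++ ty B :: X'') i D Y (by simp) hD hS2 hC
        exact ⟨E, F, a1, a2, a3, a4, by
          simpa using Prv.rdivL G X0 (X'' ++ ty F :: Y) A B C h1 (by simpa using a5)⟩
  | ldivR G A B hn h ih =>
    rintro X i D Y rfl hD hS hC
    obtain ⟨E, F, a1, a2, a3, a4, a5⟩ := ih (ty A :: X) i D Y (by simp) hD (by
      intro A' h'
      rcases List.mem_cons.1 h' with h' | h'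
      · simp at h'; subst h'; exact (s1 _ _ hC).1
      · exact hS _ h') (s1 _ _ hC).2
    exact ⟨E, F, a1, a2, a3, a4, .ldivR _ _ _ (by simp) (by simpa using a5)⟩
  | rdivR G A B hn h ih =>
    rintro X i D Y rfl hD hS hC
    obtain ⟨E, F, a1, a2, a3, a4, a5⟩ := ih X i D (Y ++ [ty A]) (by simp) hD (by
      intro A' h'
      rcases List.mem_append.1 h' with h' | h'
      · exact hS _ h'
      · simp at h'; subst h'; exact (s2 _ _ hC).2) (s2 _ _ hC).1
    exact ⟨E, F, a1, a2, a3, a4, .rdivR _ _ _ (by simp) (by simpa using a5)⟩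
  | mulL X0 Y0 A B C h ih =>
    intro X i D Y he hD hS hC
    have hsub := s3 A B (hS _ (by simp))
    have hS2 : ∀ A', ty A' ∈ X0 ++ ty A :: ty B :: Y0 → S A' := by
      intro A' h
      simp at h
      rcases h with h | rfl | rfl | h
      · exact hS _ (by simp [h])
      · exact hsub.1
      · exact hsub.2
      · exact hS _ (by simp [h])
    rcases split1 he with ⟨Y', rfl, rfl⟩ | ⟨a, b, rfl, e2, rfl⟩ | ⟨X', rfl, rfl⟩
    · obtain ⟨E, F, a1, a2, a3, a4, a5⟩ := ih X i D (Y' ++ ty A :: ty B :: Y0) (by simp) hD hS2 hC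
      exact ⟨E, F, a1, a2, a3, a4, by
        simpa using Prv.mulL (X ++ ty F :: Y') Y0 A B C (by simpa using a5)⟩
    · obtain ⟨a', b', rfl, rfl, rfl⟩ := seg_ty e2
      obtain ⟨E, F, a1, a2, a3, a4, a5⟩ := ih X i (a' ++ ty A :: ty B :: b') Y (by simp)
        (by simpa [Bal] using hD) hS2 hC
      exact ⟨E, F, by simpa using Prv.mulL a' b' A B E a1, a2, a3, a4, a5⟩
    · obtain ⟨E, F, a1, a2, a3, a4, a5⟩ := ih (X0 ++ ty A :: ty B :: X') i D Y (by simp) hD hS2 hC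
      exact ⟨E, F, a1, a2, a3, a4, by
        simpa using Prv.mulL X0 (X' ++ ty F :: Y) A B C (by simpa using a5)⟩
  | mulR G D0 A B h1 h2 ih1 ih2 =>
    intro X i D Y he hD hS hC
    rcases seg_blk hD (.inl h1.bal) he with ⟨Y', rfl, rfl⟩ | ⟨X', rfl, rfl⟩
    · obtain ⟨E, F, a1, a2, a3, a4, a5⟩ := ih1 X i D Y' (by simp) hD
        (fun A' h => hS _ (List.mem_append_left _ h)) (s3 _ _ hC).1
      exact ⟨E, F, a1, a2, a3, a4, by simpa using Prv.mulR _ _ _ _ a5 h2⟩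
    · obtain ⟨E, F, a1, a2, a3, a4, a5⟩ := ih2 X' i D Y (by simp) hD
        (fun A' h => hS _ (List.mem_append_right _ h)) (s3 _ _ hC).2
      exact ⟨E, F, a1, a2, a3, a4, by simpa using Prv.mulR _ _ _ _ h1 a5⟩
  | diaL X0 Y0 j A C h ih =>
    intro X i D Y he hD hS hC
    have hsub := s4 j A (hS _ (by simp))
    have hS2 : ∀ A', ty A' ∈ X0 ++ op j :: ty A :: cl :: Y0 → S A' := by
      intro A' h
      simp at h
      rcases h with h | rfl | h
      · exact hS _ (by simp [h])
      · exact hsub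
      · exact hS _ (by simp [h])
    rcases split1 he with ⟨Y', rfl, rfl⟩ | ⟨a, b, rfl, e2, rfl⟩ | ⟨X', rfl, rfl⟩
    · obtain ⟨E, F, a1, a2, a3, a4, a5⟩ :=
        ih X i D (Y' ++ op j :: ty A :: cl :: Y0) (by simp) hD hS2 hC
      exact ⟨E, F, a1, a2, a3, a4, by
        simpa using Prv.diaL (X ++ ty F :: Y') Y0 j A C (by simpa using a5)⟩
    · obtain ⟨a', b', rfl, rfl, rfl⟩ := seg_ty e2
      obtain ⟨E, F, a1, a2, a3, a4, a5⟩ := ih X i (a' ++ op j :: ty A :: cl :: b') Y (by simp)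
        (by simp [Bal] at hD ⊢; have := mn_le a'; have := mn_le b'; omega) hS2 hC
      exact ⟨E, F, by simpa using Prv.diaL a' b' j A E a1, a2, a3, a4, a5⟩
    · obtain ⟨E, F, a1, a2, a3, a4, a5⟩ :=
        ih (X0 ++ op j :: ty A :: cl :: X') i D Y (by simp) hD hS2 hC
      exact ⟨E, F, a1, a2, a3, a4, by
        simpa using Prv.diaL X0 (X' ++ ty F :: Y) j A C (by simpa using a5)⟩
  | diaR G j A h ih =>
    intro X i D Y he hD hS hC
    have hG := h.bal
    rcases X with _ | ⟨x, X⟩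
    · have hseg : Bal (op j :: (G ++ [cl])) := (Prv.diaR G j A h).bal
      have e0 := he
      simp only [List.nil_append] at e0
      rcases irr hG e0 (by simp [hD.1]) with e1 | e1
      · simp at e1
      · subst e1
        simp at he
        obtain ⟨rfl, rfl⟩ := he
        exact ⟨A, dia j A, h, s4 _ _ hC, hC, by simpa using Prv.diaR _ j A (Prv.idt A),
          by simpa using Prv.idt (dia j A)⟩
    · simp only [List.cons_append, List.cons.injEq] at he
      obtain ⟨rfl, he⟩ := he
      rcases seg_blk hD (.inl hG) he with ⟨Y', rfl, rfl⟩ | ⟨X', rfl, e1⟩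
      · obtain ⟨E, F, a1, a2, a3, a4, a5⟩ := ih X i D Y' (by simp) hD
          (fun A' h => hS _ (by simp at h; simp [h])) (s4 _ _ hC)
        exact ⟨E, F, a1, a2, a3, a4, by simpa using Prv.diaR _ j _ a5⟩
      · have := congrArg List.length e1
        simp at this
        omega
  | boxL X0 Y0 j A C h ih =>
    intro X i D Y he hD hS hC
    have hbox := hS (box j A) (by simp)
    have hsub := s5 j A hbox
    have hS2 : ∀ A', ty A' ∈ X0 ++ ty A :: Y0 → S A' := by
      intro A' h
      simp at h
      rcases h with h | rfl | h
      · exact hS _ (by simp [h])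
      · exact hsub
      · exact hS _ (by simp [h])
    have he' : (X0 ++ [op j]) ++ ty (box j A) :: (cl :: Y0) = X ++ (op i :: (D ++ [cl]) ++ Y) := by
      rw [← he]; simp
    rcases split1 he' with ⟨Y', e1, rfl⟩ | ⟨a, b, e1, e2, e3⟩ | ⟨X', rfl, e1⟩
    · rcases List.eq_nil_or_concat Y' with rfl | ⟨Y', y, rfl⟩
      · exfalso
        have e1 : X0 ++ [op j] = (X ++ op i :: D) ++ [cl] := by simpa using e1
        have := List.append_inj_right' e1 (by simp)
        simp at this
      · have e1 : X0 ++ [op j] = (X ++ (op i :: (D ++ [cl]) ++ Y')) ++ [y] := by simpa using e1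
        have e4 := List.append_inj_left' e1 (by simp)
        have e5 := List.append_inj_right' e1 (by simp)
        simp at e5
        subst e4 e5
        obtain ⟨E, F, a1, a2, a3, a4, a5⟩ := ih X i D (Y' ++ ty A :: Y0) (by simp) hD hS2 hC
        exact ⟨E, F, a1, a2, a3, a4, by
          simpa using Prv.boxL (X ++ ty F :: Y') Y0 j A C (by simpa using a5)⟩
    · obtain ⟨a', b', rfl, rfl, rfl⟩ := seg_ty e2
      rcases List.eq_nil_or_concat a' with rfl | ⟨a', x, rfl⟩
      · have e4 := List.append_inj_left' e1 (by simp)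
        have e5 := List.append_inj_right' e1 (by simp)
        simp at e5
        subst e4 e5
        rcases b' with _ | ⟨y, b'⟩
        · simp at e3
          subst e3
          exact ⟨box j A, A, Prv.idt _, hbox, hsub,
            by simpa using Prv.boxL [] [] j A A (Prv.idt A), h⟩
        · simp at e3
          obtain ⟨rfl, rfl⟩ := e3
          exfalso
          simp [Bal] at hD
          have := mn_le b'
          omega
      · have e1 : X0 ++ [op j] = (X ++ op i :: a') ++ [x] := by simpa using e1
        have e4 := List.append_inj_left' e1 (by simp)
        have e5 := List.append_inj_right' e1 (by simp)
        simp at e5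
        subst e4 e5
        rcases b' with _ | ⟨y, b'⟩
        · exfalso
          simp [Bal] at hD
          have := mn_le_ht a'
          omega
        · simp at e3
          obtain ⟨rfl, rfl⟩ := e3
          obtain ⟨E, F, a1, a2, a3, a4, a5⟩ := ih X i (a' ++ ty A :: b') Y (by simp) (by
            simp [Bal] at hD ⊢; have := mn_le a'; have := mn_le b'; omega) hS2 hC
          exact ⟨E, F, by simpa using Prv.boxL a' b' j A E a1, a2, a3, a4, a5⟩
    · rcases X' with _ | ⟨x, X'⟩
      · simp at e1
      · simp at e1
        obtain ⟨rfl, rfl⟩ := e1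
        obtain ⟨E, F, a1, a2, a3, a4, a5⟩ := ih (X0 ++ ty A :: X') i D Y (by simp) hD hS2 hC
        exact ⟨E, F, a1, a2, a3, a4, by
          simpa using Prv.boxL X0 (X' ++ ty F :: Y) j A C (by simpa using a5)⟩
  | boxR G j A hn hG h ih =>
    rintro X i D Y rfl hD hS hC
    obtain ⟨E, F, a1, a2, a3, a4, a5⟩ := ih (op j :: X) i D (Y ++ [cl]) (by simp) hD (by
      intro A' h'
      simp at h'
      exact hS _ (by simp; tauto)) (s5 _ _ hC)
    refine ⟨E, F, a1, a2, a3, a4, .boxR _ _ _ (by simp) ?_ (by simpa using a5)⟩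
    have := bal_swap hG (D' := [ty F]) (by simp [Bal] at hD ⊢; omega) (bal_ty F)
    simpa using this

theorem Prv.no_empty {i : α} {C} (h : Prv [op i, cl] C) : False := by
  obtain ⟨E, F, a1, _⟩ := jager (fun _ => True) (by simp) (by simp) (by simp) (by simp) (by simp) h
    [] i [] [] (by simp) (by simp [Bal]) (by simp) trivial
  exact a1.ne rfl
end
/-- Labels occurring in a type, in the order of the free group word. -/
def Ty.ats {α : Type} : Ty α → List α
  | prim p => [p]
  | ldiv A B => A.ats.reverse ++ B.ats
  | rdiv B A => B.ats ++ A.ats.reverse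
  | mul A B => A.ats ++ B.ats
  | dia i A => i :: A.ats
  | box i A => i :: A.ats

/-- Labels occurring in a string. -/
def sats {α : Type} : List (Sy α) → List α
  | [] => []
  | ty A :: l => A.ats ++ sats l
  | op i :: l => i :: sats l
  | cl :: l => sats l

section
variable {α : Type}

@[simp] theorem sats_nil : sats ([] : List (Sy α)) = [] := rfl
@[simp] theorem sats_ty (A : Ty α) (l) : sats (ty A :: l) = A.ats ++ sats l := rfl
@[simp] theorem sats_op (i : α) (l) : sats (op i :: l) = i :: sats l := rfl
@[simp] theorem sats_cl (l : List (Sy α)) : sats (cl :: l) = sats l := rfl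
@[simp] theorem sats_append (l k : List (Sy α)) : sats (l ++ k) = sats l ++ sats k := by
  induction l with
  | nil => simp
  | cons x l ih => cases x <;> simp [ih]

variable [DecidableEq α]

/-- Number of occurrences of a label in a type. -/
def occ (a : α) (A : Ty α) : ℕ := A.ats.count a
/-- Number of occurrences of a label in a string. -/
def oc (a : α) (l : List (Sy α)) : ℕ := (sats l).count a

@[simp] theorem occ_prim (a p : α) : occ a (prim p) = [p].count a := rfl
@[simp] theorem occ_ldiv (a : α) (A B) : occ a (ldiv A B) = occ a A + occ a B := by
  simp [occ, Ty.ats]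
@[simp] theorem occ_rdiv (a : α) (A B) : occ a (rdiv A B) = occ a A + occ a B := by
  simp [occ, Ty.ats]
@[simp] theorem occ_mul (a : α) (A B) : occ a (mul A B) = occ a A + occ a B := by
  simp [occ, Ty.ats]
@[simp] theorem occ_dia (a i : α) (A) : occ a (dia i A) = [i].count a + occ a A := by
  simp [occ, Ty.ats, List.count_cons]; omega
@[simp] theorem occ_box (a i : α) (A) : occ a (box i A) = [i].count a + occ a A := by
  simp [occ, Ty.ats, List.count_cons]; omega
@[simp] theorem oc_nil (a : α) : oc a [] = 0 := rfl
@[simp] theorem oc_ty (a : α) (A l) : oc a (ty A :: l) = occ a A + oc a l := by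
  simp [occ, oc]
@[simp] theorem oc_op (a i : α) (l) : oc a (op i :: l) = [i].count a + oc a l := by
  simp [oc, List.count_cons]; omega
@[simp] theorem oc_cl (a : α) (l) : oc a (cl :: l) = oc a l := rfl
@[simp] theorem oc_append (a : α) (l k) : oc a (l ++ k) = oc a l + oc a k := by
  simp [oc]

/-- Interpolation. -/
theorem interp {G : List (Sy α)} {C : Ty α} (h : Prv G C) : ∀ X D Y,
    G = X ++ (D ++ Y) → D ≠ [] → Bal D →
    ∃ E, Prv D E ∧ Prv (X ++ ty E :: Y) C ∧
      ∀ x, occ x E ≤ oc x D ∧ occ x E ≤ oc x X + oc x Y + occ x C := by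
  induction h with
  | id p =>
    intro X D Y he hn hD
    rcases X with _ | ⟨x, X⟩
    · rcases D with _ | ⟨y, D⟩
      · simp at hn
      · simp at he
        obtain ⟨rfl, rfl, rfl⟩ := he
        exact ⟨prim p, .id p, .id p, fun x => by simp⟩
    · simp at he
      exact absurd he.2.2.1 hn
  | ldivL G X0 Y0 A B C h1 h2 ih1 ih2 =>
    intro X D Y he hn hD
    have hG := h1.bal
    have hGn := h1.ne
    rw [← List.append_assoc] at he
    rcases split1 he with ⟨Y', e1, rfl⟩ | ⟨a, b, e1, rfl, rfl⟩ | ⟨X', rfl, rfl⟩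
    · rcases List.append_eq_append_iff.1 e1 with ⟨x, rfl, rfl⟩ | ⟨d, rfl, e2⟩
      · obtain ⟨E, a1, a2, a3⟩ := ih1 x D Y' rfl hn hD
        refine ⟨E, a1, by simpa using Prv.ldivL _ X0 Y0 A B C a2 h2, fun z => ?_⟩
        have := a3 z
        simp; omega
      · rcases List.append_eq_append_iff.1 e2 with ⟨d', rfl, rfl⟩ | ⟨g, rfl, rfl⟩
        · obtain ⟨E, a1, a2, a3⟩ := ih2 X D (d' ++ ty B :: Y0) (by simp) hn hD
          refine ⟨E, a1, by
            simpa using Prv.ldivL _ (X ++ ty E :: d') Y0 A B C h1 (by simpa using a2), fun z => ?_⟩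
          have := a3 z
          simp at this ⊢; omega
        · by_cases hd : d = []
          · subst hd
            obtain ⟨E, a1, a2, a3⟩ := ih1 [] g Y' (by simp) (by simpa using hn) (by simpa using hD)
            refine ⟨E, by simpa using a1,
              by simpa using Prv.ldivL _ X Y0 A B C a2 (by simpa using h2), fun z => ?_⟩
            have := a3 z
            simp at this ⊢; omega
          by_cases hg : g = []
          · subst hg
            obtain ⟨E, a1, a2, a3⟩ := ih2 X d (ty B :: Y0) (by simp) hd (by simpa using hD)
            refine ⟨E, by simpa using a1, by
              simpa using Prv.ldivL _ (X ++ [ty E]) Y0 A B C h1 (by simpa using a2), fun z => ?_⟩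
            have := a3 z
            simp at this ⊢; omega
          have hb : Bal d ∧ Bal g := by
            simp [Bal] at hD hG ⊢
            have := mn_le d; have := mn_le g; have := mn_le_ht d; have := mn_le_ht g
            omega
          obtain ⟨F, a1, a2, a3⟩ := ih1 [] g Y' (by simp) hg hb.2
          obtain ⟨H, b1, b2, b3⟩ := ih2 X d (ty B :: Y0) (by simp) hd hb.1
          refine ⟨mul H F, Prv.mulR _ _ _ _ b1 a1, ?_, fun z => ?_⟩
          · refine Prv.mulL _ _ _ _ _ ?_
            simpa using Prv.ldivL _ (X ++ [ty H]) Y0 A B C a2 (by simpa using b2)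
          · have := a3 z
            have := b3 z
            simp at *; omega
    · rcases List.append_eq_append_iff.1 e1 with ⟨g, rfl, rfl⟩ | ⟨a', rfl, rfl⟩
      · by_cases hg : g = []
        · subst hg
          obtain ⟨E, a1, a2, a3⟩ := ih2 X0 (ty B :: b) Y (by simp) (by simp) (by
            simp [Bal] at hD hG ⊢
            have := mn_le b
            omega)
          refine ⟨E, by simpa using Prv.ldivL _ [] b A B E (by simpa using h1) a1,
            by simpa using a2, fun z => ?_⟩
          have := a3 z
          simp at this ⊢; omega
        · have hb : Bal g ∧ Bal a ∧ Bal b := by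
            simp [Bal] at hD hG ⊢
            have := mn_le a; have := mn_le g; have := mn_le_ht a; have := mn_le_ht g
            have := mn_le b; have := mn_le_ht b
            omega
          obtain ⟨F, a1, a2, a3⟩ := ih1 [] g a (by simp) hg hb.1
          obtain ⟨H, b1, b2, b3⟩ := ih2 X0 (ty B :: b) Y (by simp) (by simp)
            (by simpa [Bal] using hb.2.2)
          refine ⟨ldiv F H, Prv.ldivR _ _ _ (by simp) ?_, ?_, fun z => ?_⟩
          · simpa using Prv.ldivL _ [] b A B H a2 b1
          · simpa using Prv.ldivL g X0 Y F H C a1 b2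
          · have := a3 z
            have := b3 z
            simp at *; omega
      · obtain ⟨E, a1, a2, a3⟩ := ih2 X (a' ++ ty B :: b) Y (by simp) (by simp) (by
          simp [Bal] at hD hG ⊢
          have := mn_le b; have := mn_le a'
          omega)
        refine ⟨E, by simpa using Prv.ldivL _ a' b A B E h1 a1, a2, fun z => ?_⟩
        have := a3 z
        simp at this ⊢; omega
    · obtain ⟨E, a1, a2, a3⟩ := ih2 (X0 ++ ty B :: X') D Y (by simp) hn hD
      refine ⟨E, a1, by
        simpa using Prv.ldivL _ X0 (X' ++ ty E :: Y) A B C h1 (by simpa using a2), fun z => ?_⟩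
      have := a3 z
      simp at this ⊢; omega
  | rdivL G X0 Y0 A B C h1 h2 ih1 ih2 =>
    intro X D Y he hn hD
    have hG := h1.bal
    have hGn := h1.ne
    rcases split1 he with ⟨Y', rfl, rfl⟩ | ⟨a, b, rfl, rfl, e1⟩ | ⟨X', rfl, e1⟩
    · obtain ⟨E, a1, a2, a3⟩ := ih2 X D (Y' ++ ty B :: Y0) (by simp) hn hD
      refine ⟨E, a1, by
        simpa using Prv.rdivL _ (X ++ ty E :: Y') Y0 A B C h1 (by simpa using a2), fun z => ?_⟩
      have := a3 z
      simp at this ⊢; omega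
    · rcases List.append_eq_append_iff.1 e1 with ⟨b', rfl, rfl⟩ | ⟨g, rfl, rfl⟩
      · obtain ⟨E, a1, a2, a3⟩ := ih2 X (a ++ ty B :: b') Y (by simp) (by simp) (by
          simp [Bal] at hD hG ⊢
          have := mn_le b'; have := mn_le a
          omega)
        refine ⟨E, by simpa using Prv.rdivL _ a b' A B E h1 a1, a2, fun z => ?_⟩
        have := a3 z
        simp at this ⊢; omega
      · by_cases hg : g = []
        · subst hg
          obtain ⟨E, a1, a2, a3⟩ := ih2 X (a ++ [ty B]) Y0 (by simp) (by simp) (by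
            simp [Bal] at hD hG ⊢
            have := mn_le a
            omega)
          refine ⟨E, by simpa using Prv.rdivL _ a [] A B E (by simpa using h1) a1,
            by simpa using a2, fun z => ?_⟩
          have := a3 z
          simp at this ⊢; omega
        · have hb : Bal g ∧ Bal a ∧ Bal b := by
            simp [Bal] at hD hG ⊢
            have := mn_le a; have := mn_le g; have := mn_le_ht a; have := mn_le_ht g
            have := mn_le b; have := mn_le_ht b
            omega
          obtain ⟨F, a1, a2, a3⟩ := ih1 b g [] (by simp) hg hb.1
          obtain ⟨H, b1, b2, b3⟩ := ih2 X (a ++ [ty B]) Y0 (by simp) (by simp)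
            (by have := hb.2.1; simp [Bal] at this ⊢; omega)
          refine ⟨rdiv H F, Prv.rdivR _ _ _ (by simp) ?_, ?_, fun z => ?_⟩
          · simpa using Prv.rdivL _ a [] A B H a2 b1
          · simpa using Prv.rdivL g X Y0 F H C a1 b2
          · have := a3 z
            have := b3 z
            simp at *; omega
    · rcases List.append_eq_append_iff.1 e1 with ⟨x, rfl, rfl⟩ | ⟨d, rfl, e2⟩
      · obtain ⟨E, a1, a2, a3⟩ := ih2 (X0 ++ ty B :: x) D Y (by simp) hn hD
        refine ⟨E, a1, by
          simpa using Prv.rdivL _ X0 (x ++ ty E :: Y) A B C h1 (by simpa using a2), fun z => ?_⟩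
        have := a3 z
        simp at this ⊢; omega
      · rcases List.append_eq_append_iff.1 e2 with ⟨d', rfl, rfl⟩ | ⟨g, rfl, rfl⟩
        · obtain ⟨E, a1, a2, a3⟩ := ih1 X' D d' (by simp) hn hD
          refine ⟨E, a1, by simpa using Prv.rdivL _ X0 Y0 A B C a2 h2, fun z => ?_⟩
          have := a3 z
          simp at this ⊢; omega
        · by_cases hd : d = []
          · subst hd
            obtain ⟨E, a1, a2, a3⟩ := ih2 (X0 ++ [ty B]) g Y (by simp) (by simpa using hn)
              (by simpa using hD)
            refine ⟨E, by simpa using a1, by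
              simpa using Prv.rdivL _ X0 (ty E :: Y) A B C h1 (by simpa using a2), fun z => ?_⟩
            have := a3 z
            simp at this ⊢; omega
          by_cases hg : g = []
          · subst hg
            obtain ⟨E, a1, a2, a3⟩ := ih1 X' d [] (by simp) hd (by simpa using hD)
            refine ⟨E, by simpa using a1, by
              simpa using Prv.rdivL _ X0 Y A B C a2 (by simpa using h2), fun z => ?_⟩
            have := a3 z
            simp at this ⊢; omega
          have hb : Bal d ∧ Bal g := by
            simp [Bal] at hD hG ⊢
            have := mn_le d; have := mn_le g; have := mn_le_ht d; have := mn_le_ht g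
            omega
          obtain ⟨F, a1, a2, a3⟩ := ih1 X' d [] (by simp) hd hb.1
          obtain ⟨H, b1, b2, b3⟩ := ih2 (X0 ++ [ty B]) g Y (by simp) hg hb.2
          refine ⟨mul F H, Prv.mulR _ _ _ _ a1 b1, ?_, fun z => ?_⟩
          · refine Prv.mulL _ _ _ _ _ ?_
            simpa using Prv.rdivL _ X0 (ty H :: Y) A B C a2 (by simpa using b2)
          · have := a3 z
            have := b3 z
            simp at *; omega
  | ldivR G A B hG h ih =>
    rintro X D Y rfl hn hD
    obtain ⟨E, a1, a2, a3⟩ := ih (ty A :: X) D Y (by simp) hn hD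
    refine ⟨E, a1, .ldivR _ _ _ (by simp) (by simpa using a2), fun z => ?_⟩
    have := a3 z
    simp at this ⊢; omega
  | rdivR G A B hG h ih =>
    rintro X D Y rfl hn hD
    obtain ⟨E, a1, a2, a3⟩ := ih X D (Y ++ [ty A]) (by simp) hn hD
    refine ⟨E, a1, .rdivR _ _ _ (by simp) (by simpa using a2), fun z => ?_⟩
    have := a3 z
    simp at this ⊢; omega
  | mulL X0 Y0 A B C h ih =>
    intro X D Y he hn hD
    rcases split1 he with ⟨Y', rfl, rfl⟩ | ⟨a, b, rfl, rfl, rfl⟩ | ⟨X', rfl, rfl⟩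
    · obtain ⟨E, a1, a2, a3⟩ := ih X D (Y' ++ ty A :: ty B :: Y0) (by simp) hn hD
      refine ⟨E, a1, by
        simpa using Prv.mulL (X ++ ty E :: Y') Y0 A B C (by simpa using a2), fun z => ?_⟩
      have := a3 z
      simp at this ⊢; omega
    · obtain ⟨E, a1, a2, a3⟩ := ih X (a ++ ty A :: ty B :: b) Y (by simp) (by simp)
        (by simpa [Bal] using hD)
      refine ⟨E, by simpa using Prv.mulL a b A B E a1, a2, fun z => ?_⟩
      have := a3 z
      simp at this ⊢; omega
    · obtain ⟨E, a1, a2, a3⟩ := ih (X0 ++ ty A :: ty B :: X') D Y (by simp) hn hD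
      refine ⟨E, a1, by
        simpa using Prv.mulL X0 (X' ++ ty E :: Y) A B C (by simpa using a2), fun z => ?_⟩
      have := a3 z
      simp at this ⊢; omega
  | mulR G D0 A B h1 h2 ih1 ih2 =>
    intro X D Y he hn hD
    have hG := h1.bal
    rcases List.append_eq_append_iff.1 he with ⟨x, rfl, rfl⟩ | ⟨d, rfl, e2⟩
    · obtain ⟨E, a1, a2, a3⟩ := ih2 x D Y (by simp) hn hD
      refine ⟨E, a1, by simpa using Prv.mulR _ _ _ _ h1 a2, fun z => ?_⟩
      have := a3 z
      simp at this ⊢; omega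
    · rcases List.append_eq_append_iff.1 e2 with ⟨d', rfl, rfl⟩ | ⟨g, rfl, rfl⟩
      · obtain ⟨E, a1, a2, a3⟩ := ih1 X D d' (by simp) hn hD
        refine ⟨E, a1, by simpa using Prv.mulR _ _ _ _ a2 h2, fun z => ?_⟩
        have := a3 z
        simp at this ⊢; omega
      · by_cases hd : d = []
        · subst hd
          obtain ⟨E, a1, a2, a3⟩ := ih2 [] g Y (by simp) (by simpa using hn) (by simpa using hD)
          refine ⟨E, by simpa using a1, by
            simpa using Prv.mulR _ _ _ _ h1 a2, fun z => ?_⟩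
          have := a3 z
          simp at this ⊢; omega
        by_cases hg : g = []
        · subst hg
          obtain ⟨E, a1, a2, a3⟩ := ih1 X d [] (by simp) hd (by simpa using hD)
          refine ⟨E, by simpa using a1, by
            simpa using Prv.mulR _ _ _ _ a2 h2, fun z => ?_⟩
          have := a3 z
          simp at this ⊢; omega
        have hb : Bal d ∧ Bal g := by
          simp [Bal] at hD hG ⊢
          have := mn_le d; have := mn_le g; have := mn_le_ht d; have := mn_le_ht g
          omega
        obtain ⟨F, a1, a2, a3⟩ := ih1 X d [] (by simp) hd hb.1
        obtain ⟨H, b1, b2, b3⟩ := ih2 [] g Y (by simp) hg hb.2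
        refine ⟨mul F H, Prv.mulR _ _ _ _ a1 b1, ?_, fun z => ?_⟩
        · refine Prv.mulL _ _ _ _ _ ?_
          simpa using Prv.mulR _ _ _ _ a2 b2
        · have := a3 z
          have := b3 z
          simp at *; omega
  | diaL X0 Y0 j A C h ih =>
    intro X D Y he hn hD
    rcases split1 he with ⟨Y', rfl, rfl⟩ | ⟨a, b, rfl, rfl, rfl⟩ | ⟨X', rfl, rfl⟩
    · obtain ⟨E, a1, a2, a3⟩ := ih X D (Y' ++ op j :: ty A :: cl :: Y0) (by simp) hn hD
      refine ⟨E, a1, by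
        simpa using Prv.diaL (X ++ ty E :: Y') Y0 j A C (by simpa using a2), fun z => ?_⟩
      have := a3 z
      simp at this ⊢; omega
    · obtain ⟨E, a1, a2, a3⟩ := ih X (a ++ op j :: ty A :: cl :: b) Y (by simp) (by simp) (by
        simp [Bal] at hD ⊢
        have := mn_le a; have := mn_le b
        omega)
      refine ⟨E, by simpa using Prv.diaL a b j A E a1, a2, fun z => ?_⟩
      have := a3 z
      simp at this ⊢; omega
    · obtain ⟨E, a1, a2, a3⟩ := ih (X0 ++ op j :: ty A :: cl :: X') D Y (by simp) hn hD
      refine ⟨E, a1, by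
        simpa using Prv.diaL X0 (X' ++ ty E :: Y) j A C (by simpa using a2), fun z => ?_⟩
      have := a3 z
      simp at this ⊢; omega
  | diaR G j A h ih =>
    intro X D Y he hn hD
    have hG := h.bal
    rcases X with _ | ⟨x, X⟩
    · simp only [List.nil_append] at he
      rcases irr hG he hD.1 with e1 | rfl
      · exact absurd e1 hn
      · simp at he
        subst he
        obtain ⟨E, a1, a2, a3⟩ := ih [] G [] (by simp) h.ne hG
        refine ⟨dia j E, Prv.diaR _ _ _ a1, ?_, fun z => ?_⟩
        · exact Prv.diaL [] [] _ _ _ (by simpa using Prv.diaR _ j _ a2)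
        · have := a3 z
          simp at this ⊢; omega
    · simp only [List.cons_append, List.cons.injEq] at he
      obtain ⟨rfl, he⟩ := he
      rcases List.eq_nil_or_concat Y with rfl | ⟨Y, y, rfl⟩
      · exfalso
        simp at he
        rcases List.eq_nil_or_concat D with rfl | ⟨D, y, rfl⟩
        · exact hn rfl
        · rw [List.concat_eq_append, ← List.append_assoc] at he
          have e4 := List.append_inj_left' he (by simp)
          have e5 := List.append_inj_right' he (by simp)
          simp at e5
          subst e4 e5
          simp [Bal] at hD hG
          have := mn_le_ht X
          omega
      · have he : G ++ [cl] = (X ++ (D ++ Y)) ++ [y] := by simpa using he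
        have e4 := List.append_inj_left' he (by simp)
        have e5 := List.append_inj_right' he (by simp)
        simp at e5
        subst e4 e5
        obtain ⟨E, a1, a2, a3⟩ := ih X D Y rfl hn hD
        refine ⟨E, a1, by simpa using Prv.diaR _ j _ a2, fun z => ?_⟩
        have := a3 z
        simp at this ⊢; omega
  | boxL X0 Y0 j A C h ih =>
    intro X D Y he hn hD
    have he' : (X0 ++ [op j]) ++ ty (box j A) :: (cl :: Y0) = X ++ (D ++ Y) := by
      rw [← he]; simp
    rcases split1 he' with ⟨Y', e1, rfl⟩ | ⟨a, b, e1, rfl, e3⟩ | ⟨X', rfl, e1⟩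
    · rcases List.eq_nil_or_concat Y' with rfl | ⟨Y', y, rfl⟩
      · exfalso
        simp at e1
        rcases List.eq_nil_or_concat D with rfl | ⟨D, y, rfl⟩
        · exact hn rfl
        · rw [List.concat_eq_append, ← List.append_assoc] at e1
          have e5 := List.append_inj_right' e1 (by simp)
          simp at e5
          subst e5
          simp [Bal] at hD
          have := mn_le_ht D
          omega
      · have e1 : X0 ++ [op j] = (X ++ (D ++ Y')) ++ [y] := by simpa using e1
        have e4 := List.append_inj_left' e1 (by simp)
        have e5 := List.append_inj_right' e1 (by simp)
        simp at e5
        subst e4 e5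
        obtain ⟨E, a1, a2, a3⟩ := ih X D (Y' ++ ty A :: Y0) (by simp) hn hD
        refine ⟨E, a1, by
          simpa using Prv.boxL (X ++ ty E :: Y') Y0 j A C (by simpa using a2), fun z => ?_⟩
        have := a3 z
        simp at this ⊢; omega
    · rcases List.eq_nil_or_concat a with rfl | ⟨a, x, rfl⟩
      · simp at e1
        subst e1
        rcases b with _ | ⟨y, b⟩
        · simp at e3
          subst e3
          obtain ⟨E, a1, a2, a3⟩ := ih X0 [ty A] Y0 (by simp) (by simp) (bal_ty A)
          refine ⟨box j E, Prv.boxR _ _ _ (by simp) (bal_ty _) ?_, ?_, fun z => ?_⟩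
          · simpa using Prv.boxL [] [] j A E a1
          · simpa using Prv.boxL X0 Y0 j E C a2
          · have := a3 z
            simp at this ⊢; omega
        · simp at e3
          obtain ⟨rfl, rfl⟩ := e3
          exfalso
          simp [Bal] at hD
          have := mn_le b
          omega
      · have e1 : X0 ++ [op j] = (X ++ a) ++ [x] := by simpa using e1
        have e4 := List.append_inj_left' e1 (by simp)
        have e5 := List.append_inj_right' e1 (by simp)
        simp at e5
        subst e4 e5
        rcases b with _ | ⟨y, b⟩
        · exfalso
          simp [Bal] at hD
          have := mn_le_ht a
          omega
        · simp at e3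
          obtain ⟨rfl, rfl⟩ := e3
          obtain ⟨E, a1, a2, a3⟩ := ih X (a ++ ty A :: b) Y (by simp) (by simp) (by
            simp [Bal] at hD ⊢; have := mn_le a; have := mn_le b; omega)
          refine ⟨E, by simpa using Prv.boxL a b j A E a1, a2, fun z => ?_⟩
          have := a3 z
          simp at this ⊢; omega
    · rcases X' with _ | ⟨x, X'⟩
      · exfalso
        rcases D with _ | ⟨y, D⟩
        · exact hn rfl
        · simp at e1
          obtain ⟨rfl, rfl⟩ := e1
          simp [Bal] at hD
          have := mn_le D
          omega
      · simp at e1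
        obtain ⟨rfl, rfl⟩ := e1
        obtain ⟨E, a1, a2, a3⟩ := ih (X0 ++ ty A :: X') D Y (by simp) hn hD
        refine ⟨E, a1, by
          simpa using Prv.boxL X0 (X' ++ ty E :: Y) j A C (by simpa using a2), fun z => ?_⟩
        have := a3 z
        simp at this ⊢; omega
  | boxR G j A hGn hG h ih =>
    rintro X D Y rfl hn hD
    obtain ⟨E, a1, a2, a3⟩ := ih (op j :: X) D (Y ++ [cl]) (by simp) hn hD
    refine ⟨E, a1, .boxR _ _ _ (by simp) ?_ (by simpa using a2), fun z => ?_⟩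
    · simpa using bal_swap hG hD (bal_ty E)
    · have := a3 z
      simp at this ⊢; omega
end

section
variable {α : Type} [DecidableEq α]

/-- Length of longest common prefix. -/
def lcp {β : Type} [DecidableEq β] : List β → List β → ℕ
  | a :: l, b :: k => if a = b then lcp l k + 1 else 0
  | _, _ => 0

theorem lcp_ultra {β : Type} [DecidableEq β] (x y z : List β) :
    min (lcp x y) (lcp y z) ≤ lcp x z := by
  induction x generalizing y z with
  | nil => simp [lcp]
  | cons a x ih =>
    cases y with
    | nil => simp [lcp]
    | cons b y =>
      cases z with
      | nil => simp [lcp]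
      | cons c z =>
        have := ih y z
        simp only [lcp]
        split_ifs <;> simp_all <;> omega

open FreeGroup in
theorem norm_lcp (L K : List (α × Bool)) (hL : FreeGroup.IsReduced L) (hK : FreeGroup.IsReduced K) :
    FreeGroup.norm ((FreeGroup.mk L)⁻¹ * FreeGroup.mk K) + 2 * lcp L K = L.length + K.length := by
  induction L generalizing K with
  | nil => simp [lcp, FreeGroup.norm, hK.reduce_eq, ← FreeGroup.one_eq_mk]
  | cons a L ih =>
    cases K with
    | nil =>
      have : FreeGroup.norm ((FreeGroup.mk (a :: L))⁻¹ * FreeGroup.mk []) = (a :: L).length := by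
        rw [← FreeGroup.one_eq_mk, mul_one, FreeGroup.norm_inv_eq, FreeGroup.norm,
          FreeGroup.toWord_mk, hL.reduce_eq]
      rw [this]; simp [lcp]
    | cons b K =>
      by_cases hab : a = b
      · subst hab
        have h := ih K hL.tail hK.tail
        have e : ∀ M : List (α × Bool), FreeGroup.mk (a :: M) = FreeGroup.mk [a] * FreeGroup.mk M := by
          intro M; simp
        rw [e L, e K]
        have : (FreeGroup.mk [a] * FreeGroup.mk L)⁻¹ * (FreeGroup.mk [a] * FreeGroup.mk K) =
          (FreeGroup.mk L)⁻¹ * FreeGroup.mk K := by group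
        rw [this]
        simp only [lcp, List.length_cons, if_true]
        omega
      · have : FreeGroup.IsReduced (FreeGroup.invRev (a :: L) ++ b :: K) := by
          have h1 : FreeGroup.IsReduced (FreeGroup.invRev (a :: L)) := by
            apply FreeGroup.IsReduced.of_reduce_eq
            rw [FreeGroup.reduce_invRev, hL.reduce_eq]
          unfold FreeGroup.IsReduced at *
          rw [List.isChain_append]
          refine ⟨h1, hK, ?_⟩
          simp [FreeGroup.invRev]
          rintro h
          rcases a with ⟨a, c⟩
          rcases b with ⟨b, d⟩
          simp at h hab ⊢
          subst h
          simp at hab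
          cases c <;> cases d <;> simp_all
        rw [FreeGroup.inv_mk, FreeGroup.mul_mk]
        simp [FreeGroup.norm, this.reduce_eq, lcp, hab]

theorem four (x y z : FreeGroup α) :
    x.norm + y.norm + (y⁻¹ * z).norm + (x⁻¹ * z).norm ≤ x.norm + z.norm + (y⁻¹ * z).norm + (x⁻¹ * y).norm ∨
    y.norm + z.norm + (x⁻¹ * z).norm ≤ x.norm + z.norm + (y⁻¹ * z).norm := by
  have e : ∀ u v : FreeGroup α, (u⁻¹ * v).norm + 2 * lcp u.toWord v.toWord = u.norm + v.norm := by
    intro u v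
    have := norm_lcp u.toWord v.toWord FreeGroup.isReduced_toWord FreeGroup.isReduced_toWord
    rwa [FreeGroup.mk_toWord, FreeGroup.mk_toWord] at this
  have h1 := e x y
  have h2 := e y z
  have h3 := e x z
  have := lcp_ultra x.toWord y.toWord z.toWord
  rcases min_le_iff.1 this with h | h
  · left; omega
  · right; omega

theorem pent_aux (l : List (FreeGroup α)) : ∀ a u : FreeGroup α,
    (u :: l).IsChain (fun u v => max u.norm v.norm < (u * v).norm) → a.norm < (a * u).norm →
    (a * u).norm ≤ (a * u * l.prod).norm := by
  induction l with
  | nil => intro a u _ _; simp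
  | cons v l ih =>
    intro a u hc h
    rw [List.isChain_cons_cons] at hc
    obtain ⟨h1, h2⟩ := hc
    have h3 : (a * u).norm < (a * u * v).norm := by
      have := four a (a * u) (a * u * v)
      have e1 : (a * u)⁻¹ * (a * u * v) = v := by group
      have e2 : a⁻¹ * (a * u * v) = u * v := by group
      have e3 : a⁻¹ * (a * u) = u := by group
      rw [e1, e2, e3] at this
      have := max_lt_iff.1 h1
      omega
    have := ih (a * u) v h2 h3
    rw [List.prod_cons, ← mul_assoc]
    omega

theorem pent (l : List (FreeGroup α)) (hl : 2 ≤ l.length) (hp : l.prod = 1) :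
    ∃ P Q u v, l = P ++ u :: v :: Q ∧ (u * v).norm ≤ max u.norm v.norm := by
  by_contra hcon
  push Not at hcon
  have hc : l.IsChain (fun u v => max u.norm v.norm < (u * v).norm) := by
    rw [List.isChain_iff_forall_rel_of_append_cons_cons]
    intro a b P Q h
    exact hcon P Q a b h
  rcases l with _ | ⟨u, _ | ⟨v, l⟩⟩
  · simp at hl
  · simp at hl
  · rw [List.isChain_cons_cons] at hc
    have h1 := max_lt_iff.1 hc.1
    have := pent_aux l u v hc.2 h1.1
    rw [List.prod_cons, List.prod_cons, ← mul_assoc] at hp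
    rw [hp] at this
    simp at this
    simp [this] at h1

/-- Free group word of a type. -/
def wd {α : Type} : Ty α → List (α × Bool)
  | prim p => [(p, true)]
  | ldiv A B => FreeGroup.invRev (wd A) ++ wd B
  | rdiv B A => wd B ++ FreeGroup.invRev (wd A)
  | mul A B => wd A ++ wd B
  | dia i A => (i, true) :: wd A
  | box i A => (i, false) :: wd A

theorem wd_fst (A : Ty α) : (wd A).map Prod.fst = A.ats := by
  induction A <;> simp_all [wd, Ty.ats, FreeGroup.invRev, Function.comp_def]

/-- Free group interpretation of a type. -/
def gT (A : Ty α) : FreeGroup α := FreeGroup.mk (wd A)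

theorem gT_ldiv (A B : Ty α) : gT (ldiv A B) = (gT A)⁻¹ * gT B := by
  simp [gT, wd, FreeGroup.inv_mk, FreeGroup.mul_mk]
theorem gT_rdiv (A B : Ty α) : gT (rdiv B A) = gT B * (gT A)⁻¹ := by
  simp [gT, wd, FreeGroup.inv_mk, FreeGroup.mul_mk]
theorem gT_mul (A B : Ty α) : gT (mul A B) = gT A * gT B := by
  simp [gT, wd, FreeGroup.inv_mk, FreeGroup.mul_mk]
theorem gT_dia (i : α) (A : Ty α) : gT (dia i A) = FreeGroup.of i * gT A := by
  simp [gT, wd, FreeGroup.of, FreeGroup.mul_mk]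
theorem gT_box (i : α) (A : Ty α) : gT (box i A) = (FreeGroup.of i)⁻¹ * gT A := by
  simp [gT, wd, FreeGroup.of, FreeGroup.mul_mk, FreeGroup.inv_mk, FreeGroup.invRev]

/-- Free group interpretation of a string. -/
def gS {α : Type} : List (Sy α) → FreeGroup α
  | [] => 1
  | ty A :: l => gT A * gS l
  | op i :: l => FreeGroup.of i * gS l
  | cl :: l => gS l

@[simp] theorem gS_append (l k : List (Sy α)) : gS (l ++ k) = gS l * gS k := by
  induction l with
  | nil => simp [gS]
  | cons x l ih => cases x <;> simp [gS, ih, mul_assoc]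

theorem Prv.gS {G : List (Sy α)} {C} (h : Prv G C) : gS G = gT C := by
  induction h with
  | id p => simp [LD.gS]
  | ldivL G X Y A B C h1 h2 i1 i2 =>
    rw [← i2]; simp [LD.gS, gT_ldiv, i1, mul_assoc]
  | rdivL G X Y A B C h1 h2 i1 i2 =>
    rw [← i2]; simp [LD.gS, gT_rdiv, i1, mul_assoc]
  | ldivR G A B h h1 i => rw [gT_ldiv, ← i]; simp [LD.gS]
  | rdivR G A B h h1 i => rw [gT_rdiv, ← i]; simp [LD.gS]
  | mulL X Y A B C h i => rw [← i]; simp [LD.gS, gT_mul, mul_assoc]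
  | mulR G D A B _ _ i1 i2 => simp [gT_mul, i1, i2]
  | diaL X Y i A C h i => rw [← i]; simp [LD.gS, gT_dia, mul_assoc]
  | diaR G i A h i => simp [LD.gS, gT_dia, i]
  | boxL X Y i A C h i => rw [← i]; simp [LD.gS, gT_box, mul_assoc]
  | boxR G i A _ _ h i => rw [gT_box, ← i]; simp [LD.gS]

theorem norm_gT_le (A : Ty α) : (gT A).norm ≤ A.ats.length := by
  have := FreeGroup.norm_mk_le (L₁ := wd A)
  have h2 := congrArg List.length (wd_fst A)
  rw [List.length_map] at h2
  rw [← h2]; exact this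

theorem norm_gT (A : Ty α) (h : ∀ a, occ a A ≤ 1) : (gT A).norm = A.ats.length := by
  have h1 : A.ats.Nodup := List.nodup_iff_count_le_one.2 h
  rw [← wd_fst] at h1 ⊢
  have h2 : FreeGroup.IsReduced (wd A) := by
    unfold FreeGroup.IsReduced
    have h3 := (List.pairwise_map.1 h1).isChain
    exact h3.imp (fun a b hab h => absurd h hab)
  simp [gT, FreeGroup.norm, h2.reduce_eq]


end

/-- Relabelling of types. -/
def Ty.map {α β : Type} (f : α → β) : Ty α → Ty β
  | prim p => prim (f p)
  | ldiv A B => ldiv (A.map f) (B.map f)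
  | rdiv A B => rdiv (A.map f) (B.map f)
  | mul A B => mul (A.map f) (B.map f)
  | dia i A => dia (f i) (A.map f)
  | box i A => box (f i) (A.map f)

/-- Relabelling of symbols. -/
def Sy.map {α β : Type} (f : α → β) : Sy α → Sy β
  | ty A => ty (A.map f)
  | op i => op (f i)
  | cl => cl

section
variable {α β γ : Type}

@[simp] theorem symap_ty (f : α → β) (A) : (ty A).map f = ty (A.map f) := rfl
@[simp] theorem symap_op (f : α → β) (i) : (op i).map f = op (f i) := rfl
@[simp] theorem symap_cl (f : α → β) : (cl : Sy α).map f = cl := rfl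

theorem symap_eq_ty (f : α → β) (s A) : s.map f = ty A ↔ ∃ A', s = ty A' ∧ A'.map f = A := by
  cases s <;> simp
theorem symap_eq_op (f : α → β) (s i) : s.map f = op i ↔ ∃ j, s = op j ∧ f j = i := by
  cases s <;> simp
theorem symap_eq_cl (f : α → β) (s) : s.map f = cl ↔ s = cl := by
  cases s <;> simp

theorem Ty.map_map (f : α → β) (g : β → γ) (A : Ty α) : (A.map f).map g = A.map (g ∘ f) := by
  induction A <;> simp_all [Ty.map]
theorem Sy.map_map (f : α → β) (g : β → γ) (A : Sy α) : (A.map f).map g = A.map (g ∘ f) := by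
  cases A <;> simp [Ty.map_map]

theorem ats_map (f : α → β) (A : Ty α) : (A.map f).ats = A.ats.map f := by
  induction A <;> simp_all [Ty.map, Ty.ats]

theorem sats_map (f : α → β) (l : List (Sy α)) : sats (l.map (Sy.map f)) = (sats l).map f := by
  induction l with
  | nil => rfl
  | cons x l ih => cases x <;> simp [ih, ats_map]

@[simp] theorem ht_map (f : α → β) (l : List (Sy α)) : ht (l.map (Sy.map f)) = ht l := by
  induction l with
  | nil => rfl
  | cons x l ih => cases x <;> simp [ih]
@[simp] theorem mn_map (f : α → β) (l : List (Sy α)) : mn (l.map (Sy.map f)) = mn l := by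
  induction l with
  | nil => rfl
  | cons x l ih => cases x <;> simp [ih]
@[simp] theorem bal_map (f : α → β) (l : List (Sy α)) : Bal (l.map (Sy.map f)) ↔ Bal l := by
  simp [Bal]

theorem Prv.map (f : α → β) {G : List (Sy α)} {C} (h : Prv G C) :
    Prv (G.map (Sy.map f)) (C.map f) := by
  induction h with
  | id p => exact .id _
  | ldivL G X Y A B C h1 h2 i1 i2 =>
    simp at i2
    simpa [Ty.map] using Prv.ldivL _ _ _ _ _ _ i1 i2
  | rdivL G X Y A B C h1 h2 i1 i2 =>
    simp at i2
    simpa [Ty.map] using Prv.rdivL _ _ _ _ _ _ i1 i2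
  | ldivR G A B h h1 i =>
    exact .ldivR _ _ _ (by simpa using h) (by simpa using i)
  | rdivR G A B h h1 i =>
    exact .rdivR _ _ _ (by simpa using h) (by simpa using i)
  | mulL X Y A B C h i =>
    simp at i
    simpa [Ty.map] using Prv.mulL _ _ _ _ _ i
  | mulR G D A B _ _ i1 i2 => simpa [Ty.map] using Prv.mulR _ _ _ _ i1 i2
  | diaL X Y i A C h i =>
    simp at i
    simpa [Ty.map] using Prv.diaL _ _ _ _ _ i
  | diaR G i A h i => simpa [Ty.map] using Prv.diaR _ _ _ i
  | boxL X Y i A C h i =>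
    simp at i
    simpa [Ty.map] using Prv.boxL _ _ _ _ _ i
  | boxR G i A h1 h2 h i =>
    exact .boxR _ _ _ (by simpa using h1) (by simpa using h2) (by simpa using i)

theorem cnt1 [DecidableEq α] (a i : α) : [i].count a ≤ 1 := by
  simpa using List.count_le_length (a := a) (l := [i])
theorem cnt0 [DecidableEq α] (a i : α) (h : a ≠ i) : [i].count a = 0 :=
  List.count_eq_zero_of_not_mem (by simpa using h)
theorem oc_map_inj [DecidableEq α] [DecidableEq β] (f : α → β) (hf : Function.Injective f) (a G) :
    oc (f a) (G.map (Sy.map f)) = oc a G := by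
  unfold oc; rw [sats_map, List.count_map_of_injective _ _ hf]
theorem occ_map_inj [DecidableEq α] [DecidableEq β] (f : α → β) (hf : Function.Injective f) (a A) :
    occ (f a) (A.map f) = occ a A := by
  unfold occ; rw [ats_map, List.count_map_of_injective _ _ hf]
theorem oc_map_out [DecidableEq β] (f : α → β) (b) (hb : ∀ a, f a ≠ b) (G : List (Sy α)) :
    oc b (G.map (Sy.map f)) = 0 := by
  unfold oc; rw [sats_map]; apply List.count_eq_zero_of_not_mem
  intro h; obtain ⟨c, _, hc⟩ := List.mem_map.1 h; exact hb c hc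
theorem occ_map_out [DecidableEq β] (f : α → β) (b) (hb : ∀ a, f a ≠ b) (A : Ty α) :
    occ b (A.map f) = 0 := by
  unfold occ; rw [ats_map]; apply List.count_eq_zero_of_not_mem
  intro h; obtain ⟨c, _, hc⟩ := List.mem_map.1 h; exact hb c hc

/-- Existence of thin relabellings. -/
def Thn (G : List (Sy ℕ)) (C : Ty ℕ) : Prop :=
  ∃ (G' : List (Sy (ℕ × ℕ))) (C' : Ty (ℕ × ℕ)), Prv G' C' ∧ G'.map (Sy.map Prod.fst) = G ∧
    C'.map Prod.fst = C ∧ ∀ a, oc a G' + occ a C' ≤ 2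

theorem Thn.re {G C} (h : Thn G C) (f : ℕ → ℕ) (hf : Function.Injective f) :
    ∃ (G' : List (Sy (ℕ × ℕ))) (C' : Ty (ℕ × ℕ)), Prv G' C' ∧ G'.map (Sy.map Prod.fst) = G ∧
    C'.map Prod.fst = C ∧ ∀ a, oc a G' + occ a C' ≤ 2 ∧
      ((∀ k, f k ≠ a.2) → oc a G' + occ a C' = 0) := by
  obtain ⟨G', C', h1, h2, h3, h4⟩ := h
  have hF : Function.Injective (fun x : ℕ × ℕ => (x.1, f x.2)) := by
    rintro ⟨a, b⟩ ⟨c, d⟩ h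
    simp at h
    simp [h.1, hf h.2]
  refine ⟨_, _, h1.map (fun x => (x.1, f x.2)), ?_, ?_, fun a => ⟨?_, ?_⟩⟩
  · rw [← h2]; simp [Sy.map_map, Function.comp_def]
  · rw [← h3]; simp [Ty.map_map, Function.comp_def]
  · by_cases ha : ∃ b, (fun x : ℕ × ℕ => (x.1, f x.2)) b = a
    · obtain ⟨b, rfl⟩ := ha
      have e1 := oc_map_inj _ hF b G'
      have e2 := occ_map_inj _ hF b C'
      rw [e1, e2]
      exact h4 b
    · push Not at ha
      rw [oc_map_out _ _ ha, occ_map_out _ _ ha]; omega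
  · intro hk
    have ha : ∀ b, (fun x : ℕ × ℕ => (x.1, f x.2)) b ≠ a := by
      rintro b rfl; exact hk _ rfl
    rw [oc_map_out _ _ ha, occ_map_out _ _ ha]

theorem par_cases (a : ℕ × ℕ) : (∀ k, 2 * k ≠ a.2) ∨ (∀ k, 2 * k + 1 ≠ a.2) := by
  by_contra h
  push Not at h
  obtain ⟨⟨k, hk⟩, ⟨j, hj⟩⟩ := h
  omega

theorem inj_e : Function.Injective (fun k : ℕ => 2 * k) := fun a b h => by simp at h; omega
theorem inj_o : Function.Injective (fun k : ℕ => 2 * k + 1) := fun a b h => by simp at h; omega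
theorem inj_s : Function.Injective (fun k : ℕ => k + 1) := fun a b h => by simp at h; omega

theorem thin {G : List (Sy ℕ)} {C} (h : Prv G C) : Thn G C := by
  induction h with
  | id p => exact ⟨[ty (prim (p, 0))], prim (p, 0), .id _, rfl, rfl, fun a => by
      have := cnt1 a (p, 0)
      simp only [oc_ty, occ_prim, oc_nil]; omega⟩
  | ldivL G X Y A B C h1 h2 i1 i2 =>
    obtain ⟨G', A', p1, rfl, rfl, p4⟩ := i1.re _ inj_e
    obtain ⟨D', C', q1, q2, rfl, q4⟩ := i2.re _ inj_o
    simp only [List.map_eq_append_iff, List.map_eq_cons_iff, symap_eq_ty] at q2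
    obtain ⟨X', _, rfl, rfl, _, Y', rfl, ⟨B', rfl, rfl⟩, rfl⟩ := q2
    refine ⟨_, _, .ldivL _ _ _ _ _ _ p1 q1, by simp [Ty.map], rfl, fun a => ?_⟩
    have p := p4 a; have q := q4 a
    simp at p q ⊢
    rcases par_cases a with h | h
    · have := p.2 h; omega
    · have := q.2 h; omega
  | rdivL G X Y A B C h1 h2 i1 i2 =>
    obtain ⟨G', A', p1, rfl, rfl, p4⟩ := i1.re _ inj_e
    obtain ⟨D', C', q1, q2, rfl, q4⟩ := i2.re _ inj_o
    simp only [List.map_eq_append_iff, List.map_eq_cons_iff, symap_eq_ty] at q2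
    obtain ⟨X', _, rfl, rfl, _, Y', rfl, ⟨B', rfl, rfl⟩, rfl⟩ := q2
    refine ⟨_, _, .rdivL _ _ _ _ _ _ p1 q1, by simp [Ty.map], rfl, fun a => ?_⟩
    have p := p4 a; have q := q4 a
    simp at p q ⊢
    rcases par_cases a with h | h
    · have := p.2 h; omega
    · have := q.2 h; omega
  | mulR G D A B _ _ i1 i2 =>
    obtain ⟨G', A', p1, rfl, rfl, p4⟩ := i1.re _ inj_e
    obtain ⟨D', C', q1, rfl, rfl, q4⟩ := i2.re _ inj_o
    refine ⟨_, _, .mulR _ _ _ _ p1 q1, by simp, rfl, fun a => ?_⟩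
    have p := p4 a; have q := q4 a
    simp at p q ⊢
    rcases par_cases a with h | h
    · have := p.2 h; omega
    · have := q.2 h; omega
  | ldivR G A B hn h1 ih =>
    obtain ⟨D', C', q1, q2, rfl, q4⟩ := ih
    simp only [List.map_eq_append_iff, List.map_eq_cons_iff, symap_eq_ty] at q2
    obtain ⟨_, Y', rfl, ⟨B', rfl, rfl⟩, rfl⟩ := q2
    refine ⟨_, _, .ldivR _ _ _ (by simpa using hn) q1, rfl, rfl, fun a => ?_⟩
    have q := q4 a
    simp at q ⊢
    omega
  | rdivR G A B hn h1 ih =>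
    obtain ⟨D', C', q1, q2, rfl, q4⟩ := ih
    simp only [List.map_eq_append_iff, List.map_eq_cons_iff, symap_eq_ty, List.map_eq_nil_iff] at q2
    obtain ⟨X', _, rfl, rfl, _, Y', rfl, ⟨B', rfl, rfl⟩, rfl⟩ := q2
    refine ⟨_, _, .rdivR _ _ _ (by simpa using hn) q1, rfl, rfl, fun a => ?_⟩
    have q := q4 a
    simp at q ⊢
    omega
  | mulL X Y A B C h ih =>
    obtain ⟨D', C', q1, q2, rfl, q4⟩ := ih
    simp only [List.map_eq_append_iff, List.map_eq_cons_iff, symap_eq_ty] at q2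
    obtain ⟨X', _, rfl, rfl, _, _, rfl, ⟨A', rfl, rfl⟩, _, Y', rfl, ⟨B', rfl, rfl⟩, rfl⟩ := q2
    refine ⟨_, _, .mulL _ _ _ _ _ q1, by simp [Ty.map], rfl, fun a => ?_⟩
    have q := q4 a
    simp at q ⊢
    omega
  | diaL X Y i A C h ih =>
    obtain ⟨D', C', q1, q2, rfl, q4⟩ := ih
    simp only [List.map_eq_append_iff, List.map_eq_cons_iff, symap_eq_ty, symap_eq_op,
      symap_eq_cl] at q2
    obtain ⟨X', _, rfl, rfl, _, _, rfl, ⟨j, rfl, rfl⟩, _, _, rfl, ⟨A', rfl, rfl⟩, _, Y', rfl,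
      rfl, rfl⟩ := q2
    refine ⟨_, _, .diaL _ _ _ _ _ q1, by simp [Ty.map], rfl, fun a => ?_⟩
    have q := q4 a
    simp at q ⊢
    omega
  | boxR G i A h1 h2 h ih =>
    obtain ⟨D', C', q1, q2, rfl, q4⟩ := ih
    simp only [List.map_eq_append_iff, List.map_eq_cons_iff, symap_eq_ty, symap_eq_op,
      symap_eq_cl, List.map_eq_nil_iff] at q2
    obtain ⟨_, _, rfl, ⟨j, rfl, rfl⟩, X', _, rfl, rfl, _, _, rfl, rfl, rfl⟩ := q2
    refine ⟨_, _, .boxR _ _ _ (by simpa using h1) (by simpa using h2) q1, rfl, rfl, fun a => ?_⟩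
    have q := q4 a
    simp at q ⊢
    omega
  | diaR G i A h ih =>
    obtain ⟨G', A', p1, rfl, rfl, p4⟩ := ih.re _ inj_s
    refine ⟨_, _, .diaR _ (i, 0) _ p1, by simp, rfl, fun a => ?_⟩
    have p := p4 a
    have c := cnt1 a (i, 0)
    simp only [oc_op, oc_append, oc_cl, oc_nil, occ_dia]
    by_cases ha : a = (i, 0)
    · have := p.2 (by simp [ha]); omega
    · have := cnt0 a (i, 0) ha
      omega
  | boxL X Y i A C h ih =>
    obtain ⟨D', C', q1, q2, rfl, q4⟩ := ih.re _ inj_s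
    simp only [List.map_eq_append_iff, List.map_eq_cons_iff, symap_eq_ty] at q2
    obtain ⟨X', _, rfl, rfl, _, Y', rfl, ⟨B', rfl, rfl⟩, rfl⟩ := q2
    refine ⟨_, _, .boxL _ _ (i, 0) _ _ q1, by simp [Ty.map], rfl, fun a => ?_⟩
    have p := q4 a
    have c := cnt1 a (i, 0)
    simp only [oc_op, oc_append, oc_cl, oc_ty, oc_nil, occ_box] at p ⊢
    by_cases ha : a = (i, 0)
    · have := p.2 (by simp [ha]); omega
    · have := cnt0 a (i, 0) ha
      omega

end

/-- Embedding of types with trivial bracket labels. -/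
def em : PTy → Ty ℕ
  | .prim p => prim p
  | .ldiv A B => ldiv (em A) (em B)
  | .rdiv B A => rdiv (em B) (em A)
  | .mul A B => mul (em A) (em B)
  | .dia A => dia 0 (em A)
  | .box A => box 0 (em A)

/-- Nonempty and balanced. -/
def NB (w : List (Sy ℕ)) : Prop := w ≠ [] ∧ Bal w

/-- Phase-semantic value of a type. -/
def Val : PTy → List (Sy ℕ) → Prop
  | .prim p, w => Prv w (prim p)
  | .ldiv A B, w => NB w ∧ ∀ u, Val A u → Val B (u ++ w)
  | .rdiv B A, w => NB w ∧ ∀ u, Val A u → Val B (w ++ u)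
  | .mul A B, w => NB w ∧ ∀ X Y C, (∀ u v, Val A u → Val B v → Prv (X ++ ((u ++ v) ++ Y)) C) →
      Prv (X ++ (w ++ Y)) C
  | .dia A, w => NB w ∧ ∀ X Y C, (∀ u, Val A u → Prv (X ++ (op 0 :: (u ++ [cl]) ++ Y)) C) →
      Prv (X ++ (w ++ Y)) C
  | .box A, w => NB w ∧ Val A (op 0 :: (w ++ [cl]))

theorem bal_append {α : Type} {u v : List (Sy α)} (h1 : Bal u) (h2 : Bal v) : Bal (u ++ v) := by
  simp [Bal] at *; omega

theorem bal_brk {α : Type} {u : List (Sy α)} (i : α) (h1 : Bal u) : Bal (op i :: (u ++ [cl])) := by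
  simp [Bal] at *; omega

theorem Val.nb {A w} (h : Val A w) : NB w := by
  cases A with
  | prim p => exact ⟨Prv.ne h, Prv.bal h⟩
  | _ => exact h.1

theorem val_closed (C : PTy) : ∀ (S : List (Sy ℕ) → Prop) (w x y : List (Sy ℕ)),
    NB (x ++ (w ++ y)) →
    (∀ X Y E, (∀ s, S s → Prv (X ++ (s ++ Y)) E) → Prv (X ++ (w ++ Y)) E) →
    (∀ s, S s → Val C (x ++ (s ++ y))) → Val C (x ++ (w ++ y)) := by
  induction C with
  | prim p =>
    intro S w x y _ hw hs
    exact hw x y _ hs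
  | ldiv A B _ ih =>
    intro S w x y hn hw hs
    refine ⟨hn, fun u hu => ?_⟩
    rw [← List.append_assoc]
    refine ih S w (u ++ x) y ?_ hw ?_
    · rw [List.append_assoc]
      exact ⟨by simp [hu.nb.1], bal_append hu.nb.2 hn.2⟩
    · intro s h
      rw [List.append_assoc]
      exact (hs s h).2 u hu
  | rdiv B A ih _ =>
    intro S w x y hn hw hs
    refine ⟨hn, fun u hu => ?_⟩
    rw [List.append_assoc, List.append_assoc]
    refine ih S w x (y ++ u) ?_ hw ?_
    · rw [← List.append_assoc, ← List.append_assoc, List.append_assoc x w y]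
      exact ⟨by simp [hu.nb.1], bal_append hn.2 hu.nb.2⟩
    · intro s h
      have := (hs s h).2 u hu
      simpa using this
  | mul A B _ _ =>
    intro S w x y hn hw hs
    refine ⟨hn, fun X Y E h => ?_⟩
    have := hw (X ++ x) (y ++ Y) E ?_
    · simpa using this
    · intro s h1
      have := (hs s h1).2 X Y E h
      simpa using this
  | dia A _ =>
    intro S w x y hn hw hs
    refine ⟨hn, fun X Y E h => ?_⟩
    have := hw (X ++ x) (y ++ Y) E ?_
    · simpa using this
    · intro s h1
      have := (hs s h1).2 X Y E h
      simpa using this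
  | box A ih =>
    intro S w x y hn hw hs
    refine ⟨hn, ?_⟩
    have := ih S w (op 0 :: x) (y ++ [cl]) ?_ hw ?_
    · simpa using this
    · exact ⟨by simp, by simpa using bal_brk 0 hn.2⟩
    · intro s h
      have := (hs s h).2
      simpa using this

theorem nb_ty (A : Ty ℕ) : NB [ty A] := ⟨by simp, bal_ty A⟩

theorem val_main (A : PTy) : Val A [ty (em A)] ∧ ∀ w, Val A w → Prv w (em A) := by
  induction A with
  | prim p => exact ⟨.id p, fun w h => h⟩
  | ldiv A B iA iB =>
    refine ⟨⟨nb_ty _, fun u hu => ?_⟩, fun w h => ?_⟩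
    · have := val_closed B (fun s => s = [ty (em B)]) (u ++ [ty (em (.ldiv A B))]) [] [] ?_ ?_ ?_
      · simpa using this
      · exact ⟨by simp, by simpa using bal_append hu.nb.2 (bal_ty _)⟩
      · intro X Y E h
        have := h _ rfl
        simpa [em] using Prv.ldivL u X Y _ _ _ (iA.2 u hu) (by simpa using this)
      · rintro s rfl
        simpa using iB.1
    · exact .ldivR _ _ _ h.1.1 (iB.2 _ (h.2 _ iA.1))
  | rdiv B A iB iA =>
    refine ⟨⟨nb_ty _, fun u hu => ?_⟩, fun w h => ?_⟩
    · have := val_closed B (fun s => s = [ty (em B)]) ([ty (em (.rdiv B A))] ++ u) [] [] ?_ ?_ ?_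
      · simpa using this
      · exact ⟨by simp, by simpa using bal_append (bal_ty (em (.rdiv B A))) hu.nb.2⟩
      · intro X Y E h
        have := h _ rfl
        simpa [em] using Prv.rdivL u X Y _ _ _ (iA.2 u hu) (by simpa using this)
      · rintro s rfl
        simpa using iB.1
    · exact .rdivR _ _ _ h.1.1 (iB.2 _ (h.2 _ iA.1))
  | mul A B iA iB =>
    refine ⟨⟨nb_ty _, fun X Y E h => ?_⟩, fun w h => ?_⟩
    · have := h _ _ iA.1 iB.1
      exact .mulL _ _ _ _ _ (by simpa using this)
    · have := h.2 [] [] (em (.mul A B)) (fun u v hu hv => by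
        simpa [em] using Prv.mulR _ _ _ _ (iA.2 _ hu) (iB.2 _ hv))
      simpa using this
  | dia A iA =>
    refine ⟨⟨nb_ty _, fun X Y E h => ?_⟩, fun w h => ?_⟩
    · have := h _ iA.1
      exact .diaL _ _ _ _ _ (by simpa using this)
    · have := h.2 [] [] (em (.dia A)) (fun u hu => by
        simpa [em] using Prv.diaR _ 0 _ (iA.2 _ hu))
      simpa using this
  | box A iA =>
    refine ⟨⟨nb_ty _, ?_⟩, fun w h => ?_⟩
    · have := val_closed A (fun s => s = [ty (em A)]) (op 0 :: [ty (em (.box A)), cl]) [] [] ?_ ?_ ?_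
      · simpa using this
      · exact ⟨by simp, by simp [Bal]⟩
      · intro X Y E h
        have := h _ rfl
        simpa [em] using Prv.boxL X Y 0 _ _ (by simpa using this)
      · rintro s rfl
        simpa using iA.1
    · exact .boxR _ _ _ h.1.1 h.1.2 (iA.2 _ h.2)

/-- Interpretation of hedges. -/
inductive Hd : PHedge → List (Sy ℕ) → Prop where
  | nil : Hd [] []
  | leaf (A ts u v) : Val A u → Hd ts v → Hd (.leaf A :: ts) (u ++ v)
  | node (ss ts u v) : Hd ss u → Hd ts v → Hd (.node ss :: ts) (op 0 :: (u ++ cl :: v))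

theorem Hd.bal {G w} (h : Hd G w) : Bal w := by
  induction h with
  | nil => simp [Bal]
  | leaf A ts u v h1 h2 ih => exact bal_append h1.nb.2 ih
  | node ss ts u v h1 h2 i1 i2 => simpa using bal_append (bal_brk 0 i1) i2

theorem Hd.ne {G w} (h : Hd G w) (hG : G ≠ []) : w ≠ [] := by
  cases h with
  | nil => simp at hG
  | leaf A ts u v h1 h2 => simp [h1.nb.1]
  | node ss ts u v h1 h2 => simp

theorem Hd.app {G u H v} (h1 : Hd G u) (h2 : Hd H v) : Hd (G ++ H) (u ++ v) := by
  induction h1 with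
  | nil => simpa
  | leaf A ts u v h _ ih => simpa using Hd.leaf A _ u _ h ih
  | node ss ts u v h _ _ ih => simpa using Hd.node ss _ u _ h ih

theorem Hd.split {G H w} (h : Hd (G ++ H) w) : ∃ u v, w = u ++ v ∧ Hd G u ∧ Hd H v := by
  induction G generalizing w with
  | nil => exact ⟨[], w, rfl, .nil, h⟩
  | cons t G ih =>
    cases h with
    | leaf A ts u v h1 h2 =>
      obtain ⟨a, b, rfl, h3, h4⟩ := ih h2
      exact ⟨u ++ a, b, by simp, .leaf _ _ _ _ h1 h3, h4⟩
    | node ss ts u v h1 h2 =>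
      obtain ⟨a, b, rfl, h3, h4⟩ := ih h2
      exact ⟨op 0 :: (u ++ cl :: a), b, by simp, .node _ _ _ _ h1 h3, h4⟩

theorem hd_leaf {A w} : Hd [.leaf A] w ↔ Val A w := by
  constructor
  · intro h
    cases h with
    | leaf A ts u v h1 h2 => cases h2; simpa
  · intro h
    simpa using Hd.leaf A [] w [] h .nil

theorem hd_node {G w} : Hd [.node G] w ↔ ∃ u, w = op 0 :: (u ++ [cl]) ∧ Hd G u := by
  constructor
  · intro h
    cases h with
    | node ss ts u v h1 h2 => cases h2; exact ⟨u, rfl, h1⟩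
  · rintro ⟨u, rfl, h⟩
    exact Hd.node G [] u [] h .nil

theorem hd_ctx (c : PCtx) : ∀ D w, Hd (c.plug D) w → ∃ X Y d, w = X ++ (d ++ Y) ∧ Hd D d ∧
    ∀ D' d', Hd D' d' → Hd (c.plug D') (X ++ (d' ++ Y)) := by
  induction c with
  | hole pre post =>
    intro D w h
    simp only [PCtx.plug] at h ⊢
    obtain ⟨u, Y, rfl, h, h3⟩ := h.split
    obtain ⟨X, d, rfl, h1, h2⟩ := h.split
    exact ⟨X, Y, d, by simp, h2, fun D' d' h => by simpa using (h1.app h).app h3⟩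
  | brk c pre post ih =>
    intro D w h
    simp only [PCtx.plug] at h ⊢
    obtain ⟨u, Y, rfl, h1, h2⟩ := h.split
    cases h2 with
    | node ss ts a b h3 h4 =>
    obtain ⟨X', Y', d, rfl, h5, h6⟩ := ih _ _ h3
    refine ⟨u ++ op 0 :: X', Y' ++ cl :: b, d, by simp, h5, fun D' d' h => ?_⟩
    simpa using h1.app (Hd.node _ _ _ _ (h6 _ _ h) h4)

theorem sound_val {G C} (h : PProv G C) : ∀ w, Hd G w → Val C w := by
  induction h with
  | id p => intro w h; exact hd_leaf.1 h
  | ldivL G D A B C _ _ i1 i2 =>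
    intro w h
    obtain ⟨X, Y, d, rfl, h1, h2⟩ := hd_ctx _ _ _ h
    obtain ⟨g, l, rfl, h3, h4⟩ := h1.split
    exact i2 _ (h2 _ _ (hd_leaf.2 ((hd_leaf.1 h4).2 _ (i1 _ h3))))
  | rdivL G D A B C _ _ i1 i2 =>
    intro w h
    obtain ⟨X, Y, d, rfl, h1, h2⟩ := hd_ctx _ _ _ h
    rw [← List.singleton_append] at h1
    obtain ⟨l, g, rfl, h4, h3⟩ := h1.split
    exact i2 _ (h2 _ _ (hd_leaf.2 ((hd_leaf.1 h4).2 _ (i1 _ h3))))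
  | ldivR Pi A B hn _ ih =>
    intro w h
    refine ⟨⟨h.ne hn, h.bal⟩, fun u hu => ih _ ?_⟩
    simpa using (hd_leaf.2 hu).app h
  | rdivR Pi A B hn _ ih =>
    intro w h
    refine ⟨⟨h.ne hn, h.bal⟩, fun u hu => ih _ ?_⟩
    simpa using h.app (hd_leaf.2 hu)
  | mulL D A B C _ ih =>
    intro w h
    obtain ⟨X, Y, d, rfl, h1, h2⟩ := hd_ctx _ _ _ h
    have h3 := hd_leaf.1 h1
    refine val_closed C (fun s => ∃ u v, s = u ++ v ∧ Val A u ∧ Val B v) d X Y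
      ⟨by simp [h3.nb.1], h.bal⟩ ?_ ?_
    · intro X Y E h
      exact h3.2 X Y E (fun u v hu hv => h _ ⟨u, v, rfl, hu, hv⟩)
    · rintro s ⟨u, v, rfl, hu, hv⟩
      exact ih _ (h2 _ _ (by simpa using (hd_leaf.2 hu).app (hd_leaf.2 hv)))
  | mulR G D A B _ _ i1 i2 =>
    intro w h
    obtain ⟨g, d, rfl, h1, h2⟩ := h.split
    have := i1 _ h1
    have h3 := i2 _ h2
    exact ⟨⟨by simp [this.nb.1], h.bal⟩, fun X Y E h => h _ _ this h3⟩
  | diaL D A C _ ih =>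
    intro w h
    obtain ⟨X, Y, d, rfl, h1, h2⟩ := hd_ctx _ _ _ h
    have h3 := hd_leaf.1 h1
    refine val_closed C (fun s => ∃ u, s = op 0 :: (u ++ [cl]) ∧ Val A u) d X Y
      ⟨by simp [h3.nb.1], h.bal⟩ ?_ ?_
    · intro X Y E h
      exact h3.2 X Y E (fun u hu => h _ ⟨u, rfl, hu⟩)
    · rintro s ⟨u, rfl, hu⟩
      exact ih _ (h2 _ _ (hd_node.2 ⟨u, rfl, hd_leaf.2 hu⟩))
  | diaR G A _ ih =>
    intro w h
    obtain ⟨u, rfl, hu⟩ := hd_node.1 h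
    exact ⟨⟨by simp, h.bal⟩, fun X Y E h => h _ (ih _ hu)⟩
  | boxL D A C _ ih =>
    intro w h
    obtain ⟨X, Y, d, rfl, h1, h2⟩ := hd_ctx _ _ _ h
    obtain ⟨u, rfl, hu⟩ := hd_node.1 h1
    exact ih _ (h2 _ _ (hd_leaf.2 (hd_leaf.1 hu).2))
  | boxR G A _ ih =>
    intro w h
    have h1 := ih _ (hd_node.2 ⟨w, rfl, h⟩)
    refine ⟨⟨?_, h.bal⟩, h1⟩
    rintro rfl
    exact Prv.no_empty ((val_main A).2 _ h1)
  | cut G D A B _ _ i1 i2 =>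
    intro w h
    obtain ⟨X, Y, d, rfl, h1, h2⟩ := hd_ctx _ _ _ h
    exact i2 _ (h2 _ _ (hd_leaf.2 (i1 _ h1)))

/-- The types occurring in a string. -/
def tys {α : Type} : List (Sy α) → List (Ty α)
  | [] => []
  | ty A :: l => A :: tys l
  | op _ :: l => tys l
  | cl :: l => tys l

@[simp] theorem tys_append {α : Type} (l k : List (Sy α)) : tys (l ++ k) = tys l ++ tys k := by
  induction l with
  | nil => rfl
  | cons x l ih => cases x <;> simp [tys, ih]

mutual
/-- Linearisation of a tree. -/
def flatT : PTree → List (Sy ℕ)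
  | .leaf A => [ty (em A)]
  | .node ts => op 0 :: (flatH ts ++ [cl])
/-- Linearisation of a hedge. -/
def flatH : List PTree → List (Sy ℕ)
  | [] => []
  | t :: ts => flatT t ++ flatH ts
end

mutual
theorem flatT_hd : ∀ t : PTree, Hd [t] (flatT t)
  | .leaf A => by simpa [flatT] using hd_leaf.2 (val_main A).1
  | .node ts => by simpa [flatT] using hd_node.2 ⟨_, rfl, flatH_hd ts⟩
theorem flatH_hd : ∀ t : List PTree, Hd t (flatH t)
  | [] => by simpa [flatH] using Hd.nil
  | t :: ts => by simpa [flatH] using (flatT_hd t).app (flatH_hd ts)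
end

mutual
theorem flatT_tys : ∀ t : PTree, tys (flatT t) = (yieldTree t).map em
  | .leaf A => by simp [flatT, tys, yieldTree]
  | .node ts => by simp [flatT, tys, yieldTree, flatH_tys ts]
theorem flatH_tys : ∀ t : List PTree, tys (flatH t) = (yieldHedge t).map em
  | [] => by simp [flatH, tys, yieldHedge]
  | t :: ts => by simp [flatH, yieldHedge, flatT_tys t, flatH_tys ts]
end

mutual
theorem flatT_op : ∀ t : PTree, ∀ i, op i ∈ flatT t → i = 0
  | .leaf A => by simp [flatT]
  | .node ts => by
    intro i h
    simp [flatT] at h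
    rcases h with h | h
    · exact h
    · exact flatH_op ts i h
theorem flatH_op : ∀ t : List PTree, ∀ i, op i ∈ flatH t → i = 0
  | [] => by simp [flatH]
  | t :: ts => by
    intro i h
    simp [flatH] at h
    rcases h with h | h
    · exact flatT_op t i h
    · exact flatH_op ts i h
end

theorem prv_of_pprov {G C} (h : PProv G C) : Prv (flatH G) (em C) :=
  (val_main C).2 _ (sound_val h _ (flatH_hd G))

/-- Forgetting bracket labels. -/
def ul : Ty ℕ → PTy
  | prim p => .prim p
  | ldiv A B => .ldiv (ul A) (ul B)
  | rdiv B A => .rdiv (ul B) (ul A)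
  | mul A B => .mul (ul A) (ul B)
  | dia _ A => .dia (ul A)
  | box _ A => .box (ul A)

theorem ul_em (A : PTy) : ul (em A) = A := by
  induction A <;> simp_all [em, ul]

/-- Hedges represented by strings. -/
inductive Rep : PHedge → List (Sy ℕ) → Prop where
  | nil : Rep [] []
  | leaf (A ts v) : Rep ts v → Rep (.leaf (ul A) :: ts) (ty A :: v)
  | node (i ss ts u v) : Rep ss u → Rep ts v → Rep (.node ss :: ts) (op i :: (u ++ cl :: v))

theorem Rep.bal {G w} (h : Rep G w) : Bal w := by
  induction h with
  | nil => simp [Bal]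
  | leaf A ts v h2 ih => simpa using bal_append (bal_ty A) ih
  | node i ss ts u v h1 h2 i1 i2 => simpa using bal_append (bal_brk i i1) i2

theorem Rep.app {G u H v} (h1 : Rep G u) (h2 : Rep H v) : Rep (G ++ H) (u ++ v) := by
  induction h1 with
  | nil => simpa
  | leaf A ts v _ ih => simpa using Rep.leaf A _ _ ih
  | node i ss ts u v h _ _ ih => simpa using Rep.node i ss _ u _ h ih

theorem Rep.yield {G w} (h : Rep G w) : yieldHedge G = (tys w).map ul := by
  induction h with
  | nil => simp [yieldHedge, tys]
  | leaf A ts v _ ih => simp [yieldHedge, yieldTree, tys, ih]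
  | node i ss ts u v h _ ih1 ih => simp [yieldHedge, yieldTree, tys, ih, ih1]

theorem Rep.split {G w} (h : Rep G w) : ∀ S T, w = S ++ T → Bal S →
    ∃ H K, G = H ++ K ∧ Rep H S ∧ Rep K T := by
  induction h with
  | nil =>
    intro S T h _
    simp at h
    obtain ⟨rfl, rfl⟩ := h
    exact ⟨[], [], rfl, .nil, .nil⟩
  | leaf A ts v hv ih =>
    intro S T h hS
    rcases S with _ | ⟨s, S⟩
    · simp at h
      subst h
      exact ⟨[], _, rfl, .nil, .leaf _ _ _ hv⟩
    · simp at h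
      obtain ⟨rfl, h⟩ := h
      obtain ⟨H, K, rfl, h1, h2⟩ := ih S T h (by simpa [Bal] using hS)
      exact ⟨_, _, by simp, .leaf _ _ _ h1, h2⟩
  | node i ss ts u v hu hv _ ih =>
    intro S T h hS
    rcases eq_or_ne S [] with rfl | hSn
    · simp at h
      subst h
      exact ⟨[], _, rfl, .nil, .node _ _ _ _ _ hu hv⟩
    · have h' : op i :: (u ++ [cl]) ++ v = S ++ T := by simpa using h
      have key : ∃ S', S = op i :: (u ++ [cl]) ++ S' ∧ v = S' ++ T := by
        rcases List.append_eq_append_iff.1 h' with ⟨a, h1, h2⟩ | ⟨a, h1, h2⟩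
        · exact ⟨a, h1, h2⟩
        · rcases irr hu.bal h1 hS.1 with h3 | rfl
          · exact absurd h3 hSn
          · exact ⟨[], by simpa using h1.symm, by simpa using h2.symm⟩
      obtain ⟨S', rfl, h2⟩ := key
      have hub := hu.bal
      obtain ⟨H, K, rfl, h3, h4⟩ := ih S' T h2 (by
        simp [Bal] at hS hub ⊢
        have := mn_le S'
        omega)
      exact ⟨PTree.node ss :: H, K, by simp, by simpa using Rep.node i ss H u _ hu h3, h4⟩

theorem ctx_cons (t : PTree) (c : PCtx) : ∃ c' : PCtx, ∀ H, c'.plug H = t :: c.plug H := by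
  cases c with
  | hole pre post => exact ⟨.hole (t :: pre) post, fun H => by simp [PCtx.plug]⟩
  | brk c pre post => exact ⟨.brk c (t :: pre) post, fun H => by simp [PCtx.plug]⟩

theorem Rep.parse {G w} (h : Rep G w) : ∀ X S Y, w = X ++ (S ++ Y) → S ≠ [] → Bal S →
    ∃ (c : PCtx) (H : PHedge), G = c.plug H ∧ Rep H S ∧
      ∀ H' S', Rep H' S' → Rep (c.plug H') (X ++ (S' ++ Y)) := by
  have base : ∀ {G w}, Rep G w → ∀ S Y, w = S ++ Y → Bal S →
    ∃ (c : PCtx) (H : PHedge), G = c.plug H ∧ Rep H S ∧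
      ∀ H' S', Rep H' S' → Rep (c.plug H') ([] ++ (S' ++ Y)) := by
    intro G w h S Y e hS
    obtain ⟨H, K, rfl, h1, h2⟩ := h.split S Y e hS
    exact ⟨.hole [] K, H, by simp [PCtx.plug], h1, fun H' S' h => by
      simpa [PCtx.plug] using h.app h2⟩
  induction h with
  | nil => intro X S Y h hn; simp at h; exact absurd h.2.1 hn
  | leaf A ts v hv ih =>
    intro X S Y h hn hS
    rcases X with _ | ⟨x, X⟩
    · exact base (.leaf A ts v hv) S Y h hS
    · simp at h
      obtain ⟨rfl, h⟩ := h
      obtain ⟨c, H, rfl, h1, h2⟩ := ih X S Y h hn hS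
      obtain ⟨c', hc⟩ := ctx_cons (.leaf (ul A)) c
      exact ⟨c', H, (hc H).symm, h1, fun H' S' h => by rw [hc]; exact .leaf _ _ _ (h2 _ _ h)⟩
  | node i ss ts u v hu hv ihu ihv =>
    intro X S Y h hn hS
    rcases X with _ | ⟨x, X⟩
    · exact base (.node i ss ts u v hu hv) S Y h hS
    · simp at h
      obtain ⟨rfl, h⟩ := h
      have hub := hu.bal
      rcases split1 h with ⟨Y', rfl, rfl⟩ | ⟨a, b, rfl, rfl, rfl⟩ | ⟨X', rfl, rfl⟩
      · obtain ⟨c, H, rfl, h1, h2⟩ := ihu X S Y' rfl hn hS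
        exact ⟨.brk c [] ts, H, by simp [PCtx.plug], h1, fun H' S' h => by
          simpa [PCtx.plug] using Rep.node i _ _ _ _ (h2 _ _ h) hv⟩
      · exfalso
        simp [Bal] at hub hS
        have := mn_le_ht X
        have := mn_le b
        omega
      · obtain ⟨c, H, rfl, h1, h2⟩ := ihv X' S Y rfl hn hS
        obtain ⟨c', hc⟩ := ctx_cons (.node ss) c
        exact ⟨c', H, (hc H).symm, h1, fun H' S' h => by
          rw [hc]; simpa using Rep.node i _ _ _ _ hu (h2 _ _ h)⟩

theorem Rep.cons_ty {H A w} (h : Rep H (ty A :: w)) : ∃ K, H = .leaf (ul A) :: K ∧ Rep K w := by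
  generalize e : ty A :: w = z at h
  cases h with
  | nil => simp at e
  | leaf B ts v hv => simp at e; obtain ⟨rfl, rfl⟩ := e; exact ⟨_, rfl, hv⟩
  | node => simp at e

theorem Rep.of_nil {H} (h : Rep H []) : H = [] := by
  generalize e : [] = z at h
  cases h with
  | nil => rfl
  | leaf B ts v hv => simp at e
  | node => simp at e

theorem Rep.brk {H i D} (h : Rep H (op i :: (D ++ [cl]))) (hD : Bal D) :
    ∃ K, H = [.node K] ∧ Rep K D := by
  generalize e : op i :: (D ++ [cl]) = z at h
  cases h with
  | nil => simp at e
  | leaf B ts v hv => simp at e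
  | node j ss ts u v hu hv =>
    have hub := bal_brk j hu.bal
    have e2 : op i :: (D ++ [cl]) = op j :: (u ++ [cl]) ++ v := by simpa using e
    rcases irr hD e2 hub.1 with h | rfl
    · simp at h
    · have := hv.of_nil
      subst this
      simp at e2
      obtain ⟨_, rfl⟩ := e2
      exact ⟨_, rfl, hu⟩

theorem pprov_of_prv {w C} (h : Prv w C) : ∃ G, Rep G w ∧ PProv G (ul C) := by
  induction h with
  | id p => exact ⟨_, .leaf _ _ _ .nil, .id p⟩
  | ldivL G X Y A B C h1 h2 i1 i2 =>
    obtain ⟨H, r1, p1⟩ := i1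
    obtain ⟨K, r2, p2⟩ := i2
    obtain ⟨c, L, rfl, r3, r4⟩ := r2.parse X [ty B] Y (by simp) (by simp) (bal_ty B)
    obtain ⟨M, rfl, r5⟩ := r3.cons_ty
    have := r5.of_nil
    subst this
    refine ⟨_, ?_, .ldivL _ _ _ _ _ p1 p2⟩
    simpa [ul] using r4 _ _ (r1.app (.leaf (ldiv A B) _ _ .nil))
  | rdivL G X Y A B C h1 h2 i1 i2 =>
    obtain ⟨H, r1, p1⟩ := i1
    obtain ⟨K, r2, p2⟩ := i2
    obtain ⟨c, L, rfl, r3, r4⟩ := r2.parse X [ty B] Y (by simp) (by simp) (bal_ty B)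
    obtain ⟨M, rfl, r5⟩ := r3.cons_ty
    have := r5.of_nil
    subst this
    refine ⟨_, ?_, .rdivL _ _ _ _ _ p1 p2⟩
    simpa [ul] using r4 _ _ (.leaf (rdiv B A) _ _ r1)
  | ldivR G A B hn _ ih =>
    obtain ⟨K, r2, p2⟩ := ih
    obtain ⟨M, rfl, r5⟩ := r2.cons_ty
    refine ⟨_, r5, .ldivR _ _ _ ?_ p2⟩
    rintro rfl
    cases r5; exact hn rfl
  | rdivR G A B hn _ ih =>
    obtain ⟨K, r2, p2⟩ := ih
    have hb := r2.bal
    obtain ⟨M, L, rfl, r5, r6⟩ := r2.split G [ty A] rfl (by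
      simp [Bal] at hb ⊢; have := mn_le G; omega)
    obtain ⟨N, rfl, r7⟩ := r6.cons_ty
    have := r7.of_nil
    subst this
    refine ⟨_, r5, .rdivR _ _ _ ?_ p2⟩
    rintro rfl
    cases r5; exact hn rfl
  | mulL X Y A B C _ ih =>
    obtain ⟨K, r2, p2⟩ := ih
    obtain ⟨c, L, rfl, r3, r4⟩ := r2.parse X [ty A, ty B] Y (by simp) (by simp) (by simp [Bal])
    obtain ⟨M, rfl, r5⟩ := r3.cons_ty
    obtain ⟨M', rfl, r6⟩ := r5.cons_ty
    have := r6.of_nil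
    subst this
    refine ⟨_, ?_, .mulL _ _ _ _ p2⟩
    simpa [ul] using r4 _ _ (.leaf (mul A B) _ _ .nil)
  | mulR G D A B _ _ i1 i2 =>
    obtain ⟨H, r1, p1⟩ := i1
    obtain ⟨K, r2, p2⟩ := i2
    exact ⟨_, r1.app r2, .mulR _ _ _ _ p1 p2⟩
  | diaL X Y i A C _ ih =>
    obtain ⟨K, r2, p2⟩ := ih
    obtain ⟨c, L, rfl, r3, r4⟩ := r2.parse X [op i, ty A, cl] Y (by simp) (by simp) (by simp [Bal])
    obtain ⟨M, rfl, r5⟩ := Rep.brk (D := [ty A]) r3 (bal_ty A)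
    obtain ⟨M', rfl, r6⟩ := r5.cons_ty
    have := r6.of_nil
    subst this
    refine ⟨_, ?_, .diaL _ _ _ p2⟩
    simpa [ul] using r4 _ _ (.leaf (dia i A) _ _ .nil)
  | diaR G i A _ ih =>
    obtain ⟨K, r2, p2⟩ := ih
    exact ⟨_, .node i _ _ _ _ r2 .nil, .diaR _ _ p2⟩
  | boxL X Y i A C _ ih =>
    obtain ⟨K, r2, p2⟩ := ih
    obtain ⟨c, L, rfl, r3, r4⟩ := r2.parse X [ty A] Y (by simp) (by simp) (by simp [Bal])
    obtain ⟨M, rfl, r5⟩ := r3.cons_ty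
    have := r5.of_nil
    subst this
    refine ⟨_, ?_, .boxL _ _ _ p2⟩
    simpa [ul] using r4 _ _ (.node i _ _ _ _ (.leaf (box i A) _ _ .nil) .nil)
  | boxR G i A hn hb _ ih =>
    obtain ⟨K, r2, p2⟩ := ih
    obtain ⟨M, rfl, r5⟩ := r2.brk hb
    exact ⟨_, r5, .boxR _ _ p2⟩

/-- Bounded types. -/
def Sm (m : ℕ) (B : Finset ℕ) (A : Ty ℕ) : Prop := A.ats.length ≤ m ∧ ∀ a ∈ A.ats, a ∈ B

theorem ats_pos {α : Type} (A : Ty α) : 1 ≤ A.ats.length := by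
  induction A <;> simp_all [Ty.ats] <;> omega

theorem sm_sub1 {m B} {A C D : Ty ℕ} (h1 : D.ats.length = A.ats.length + C.ats.length)
    (h2 : ∀ a, a ∈ A.ats ∨ a ∈ C.ats → a ∈ D.ats) (h : Sm (m + 1) B D) : Sm m B A ∧ Sm m B C := by
  have := ats_pos A
  have := ats_pos C
  have := h.1
  exact ⟨⟨by omega, fun a ha => h.2 a (h2 a (.inl ha))⟩, ⟨by omega, fun a ha => h.2 a (h2 a (.inr ha))⟩⟩

theorem sm_mono {m B A} (h : Sm m B A) : Sm (m + 1) B A := ⟨by have := h.1; omega, h.2⟩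

theorem sm_ldiv {m B A C} (h : Sm (m + 1) B (ldiv A C)) : Sm m B A ∧ Sm m B C :=
  sm_sub1 (by simp [Ty.ats]) (by simp [Ty.ats]) h
theorem sm_rdiv {m B A C} (h : Sm (m + 1) B (rdiv A C)) : Sm m B A ∧ Sm m B C :=
  sm_sub1 (by simp [Ty.ats]) (by simp [Ty.ats]) h
theorem sm_mul {m B A C} (h : Sm (m + 1) B (mul A C)) : Sm m B A ∧ Sm m B C :=
  sm_sub1 (by simp [Ty.ats]) (by simp [Ty.ats]) h
theorem sm_dia {m B i A} (h : Sm (m + 1) B (dia i A)) : i ∈ B ∧ Sm m B A := by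
  simp [Sm, Ty.ats] at h; exact ⟨h.2.1, h.1, h.2.2⟩
theorem sm_box {m B i A} (h : Sm (m + 1) B (box i A)) : i ∈ B ∧ Sm m B A := by
  simp [Sm, Ty.ats] at h; exact ⟨h.2.1, h.1, h.2.2⟩
theorem sm_zero {B A} (h : Sm 0 B A) : False := by
  have := ats_pos A; have := h.1; omega

theorem sm_finite (m : ℕ) (B : Finset ℕ) : {A | Sm m B A}.Finite := by
  induction m with
  | zero => exact Set.Finite.subset Set.finite_empty (fun A h => (sm_zero h).elim)
  | succ m ih =>
    have hB : (B : Set ℕ).Finite := B.finite_toSet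
    refine Set.Finite.subset ((hB.image prim).union <| (ih.image2 ldiv ih).union <|
      (ih.image2 rdiv ih).union <| (ih.image2 mul ih).union <|
      (hB.image2 dia ih).union (hB.image2 box ih)) ?_
    intro A h
    cases A with
    | prim p => left; exact ⟨p, h.2 p (by simp [Ty.ats]), rfl⟩
    | ldiv A C => right; left; exact ⟨A, (sm_ldiv h).1, C, (sm_ldiv h).2, rfl⟩
    | rdiv A C => right; right; left; exact ⟨A, (sm_rdiv h).1, C, (sm_rdiv h).2, rfl⟩
    | mul A C => right; right; right; left; exact ⟨A, (sm_mul h).1, C, (sm_mul h).2, rfl⟩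
    | dia i A => right; right; right; right; left; exact ⟨i, (sm_dia h).1, A, (sm_dia h).2, rfl⟩
    | box i A => right; right; right; right; right; exact ⟨i, (sm_box h).1, A, (sm_box h).2, rfl⟩

theorem rep_cases {G w} (h : Rep G w) :
    (∃ X i D Y, w = X ++ (op i :: (D ++ [cl]) ++ Y) ∧ Bal D) ∨ w = (tys w).map ty := by
  induction h with
  | nil => right; simp [tys]
  | leaf A ts v hv ih =>
    rcases ih with ⟨X, i, D, Y, rfl, hD⟩ | h
    · left; exact ⟨ty A :: X, i, D, Y, by simp, hD⟩
    · right; simp [tys, ← h]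
  | node i ss ts u v hu hv _ _ =>
    left; exact ⟨[], i, u, v, by simp, hu.bal⟩

theorem tys_mem {α : Type} {A : Ty α} {w : List (Sy α)} : ty A ∈ w ↔ A ∈ tys w := by
  induction w with
  | nil => simp [tys]
  | cons x w ih => cases x <;> simp [tys, ih]

@[simp] theorem tys_map_ty {α : Type} (l : List (Ty α)) : tys (l.map ty) = l := by
  induction l with
  | nil => rfl
  | cons x l ih => simp [tys, ih]

theorem unmap_ty {α β : Type} (f : α → β) (G : List (Sy α)) (l : List (Ty β))
    (h : G.map (Sy.map f) = l.map ty) : ∃ l' : List (Ty α), G = l'.map ty ∧ l'.map (Ty.map f) = l := by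
  induction l generalizing G with
  | nil => simp at h; exact ⟨[], by simp [h], rfl⟩
  | cons A l ih =>
    simp only [List.map_cons, List.map_eq_cons_iff, symap_eq_ty] at h
    obtain ⟨_, Y, rfl, ⟨A', rfl, rfl⟩, h'⟩ := h
    obtain ⟨l', rfl, rfl⟩ := ih Y h'
    exact ⟨A' :: l', rfl, rfl⟩

theorem gS_map_ty {α : Type} [DecidableEq α] (l : List (Ty α)) : gS (l.map ty) = (l.map gT).prod := by
  induction l with
  | nil => rfl
  | cons x l ih => simp [gS, ih]

theorem bal_map_ty {α : Type} (l : List (Ty α)) : Bal (l.map ty) := by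
  induction l with
  | nil => simp [Bal]
  | cons x l ih => simpa using bal_append (bal_ty x) ih

theorem sats_map_ty {α : Type} (l : List (Ty α)) (a : α) :
    a ∈ sats (l.map ty) ↔ ∃ A ∈ l, a ∈ A.ats := by
  induction l with
  | nil => simp
  | cons x l ih => simp [ih]

theorem symap_comp_ty {α β : Type} (f : α → β) :
    (Sy.map f ∘ ty : Ty α → Sy β) = ty ∘ Ty.map f := rfl

theorem occ_pos {α : Type} [DecidableEq α] (x : α) (E : Ty α) : 0 < occ x E ↔ x ∈ E.ats :=
  List.count_pos_iff

theorem oc_pos {α : Type} [DecidableEq α] (x : α) (l : List (Sy α)) : 0 < oc x l ↔ x ∈ sats l :=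
  List.count_pos_iff

theorem sm_interp {m B} {E : Ty (ℕ × ℕ)} {l : List (Ty (ℕ × ℕ))}
    (hl : ∀ A ∈ l, Sm m B (A.map Prod.fst)) (h1 : ∀ x, occ x E ≤ 1)
    (h2 : ∀ x, occ x E ≤ oc x (l.map ty)) (hn : (gT E).norm ≤ m) : Sm m B (E.map Prod.fst) := by
  rw [norm_gT E h1] at hn
  refine ⟨by simpa [ats_map] using hn, fun a ha => ?_⟩
  rw [ats_map] at ha
  obtain ⟨x, hx, rfl⟩ := List.mem_map.1 ha
  have h3 : 0 < occ x E := (occ_pos x E).2 hx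
  have h4 : x ∈ sats (l.map ty) := (oc_pos _ _).1 (lt_of_lt_of_le h3 (h2 x))
  obtain ⟨A, hA, hx⟩ := (sats_map_ty _ _).1 h4
  exact (hl A hA).2 _ (by rw [ats_map]; exact List.mem_map_of_mem hx)

theorem sm_norm {m B} {A : Ty (ℕ × ℕ)} (h : Sm m B (A.map Prod.fst)) : (gT A).norm ≤ m := by
  have := norm_gT_le A
  have := h.1
  rw [ats_map, List.length_map] at this
  omega

/-- The reduction step for bracket-free sequents. -/
theorem pentus {m B} {l : List (Ty ℕ)} {C : Ty ℕ} (h : Prv (l.map ty) C) (hl : 3 ≤ l.length)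
    (hS : ∀ A ∈ l, Sm m B A) (hC : Sm m B C) :
    (∃ p a b q E, l = p ++ a :: b :: q ∧ Sm m B E ∧ Prv ([a, b].map ty) E ∧
      Prv ((p ++ E :: q).map ty) C) ∨
    (∃ p a E, l = p ++ [a] ∧ Sm m B E ∧ Prv (p.map ty) E ∧ Prv ([E, a].map ty) C) := by
  obtain ⟨G', C', h1, h2, rfl, h4⟩ := thin h
  obtain ⟨l, rfl, rfl⟩ := unmap_ty _ _ _ h2
  have hS' : ∀ A ∈ l, Sm m B (A.map Prod.fst) := fun A hA => hS _ (List.mem_map_of_mem hA)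
  simp at hl
  have hg := h1.gS
  rw [gS_map_ty] at hg
  obtain ⟨P, Q, u, v, e, hn⟩ := pent (l.map gT ++ [(gT C')⁻¹]) (by simp; omega) (by simp [hg])
  rcases List.eq_nil_or_concat Q with rfl | ⟨Q, z, rfl⟩
  · right
    have e' : l.map gT ++ [(gT C')⁻¹] = (P ++ [u]) ++ [v] := by simpa using e
    have e1 := List.append_inj_left' e' (by simp)
    have e2 := List.append_inj_right' e' (by simp)
    simp at e2
    simp only [List.map_eq_append_iff, List.map_eq_cons_iff, List.map_eq_nil_iff] at e1
    obtain ⟨p, _, rfl, rfl, a, _, rfl, rfl, rfl⟩ := e1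
    obtain ⟨E, i1, i2, i3⟩ := interp h1 [] (p.map ty) [ty a] (by simp)
      (by rintro h; simp at h; subst h; simp at hl) (bal_map_ty p)
    have hE : Sm m B (E.map Prod.fst) := by
      apply sm_interp (l := p) (fun A hA => hS' A (by simp [hA]))
      · intro x
        have := i3 x; have := h4 x
        simp at *; omega
      · exact fun x => (i3 x).1
      · have g1 := i1.gS
        rw [gS_map_ty] at g1
        have : gT E = (gT a * v)⁻¹ := by
          rw [← g1, ← e2]; simp at hg; simp [← hg]
        rw [this, FreeGroup.norm_inv_eq]
        refine hn.trans (max_le (sm_norm (hS' a (by simp))) ?_)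
        rw [← e2, FreeGroup.norm_inv_eq]
        exact sm_norm hC
    refine ⟨p.map (Ty.map Prod.fst), a.map Prod.fst, _, by simp, hE, ?_, ?_⟩
    · simpa [symap_comp_ty] using i1.map Prod.fst
    · simpa [symap_comp_ty] using i2.map Prod.fst
  · left
    have e' : l.map gT ++ [(gT C')⁻¹] = (P ++ u :: v :: Q) ++ [z] := by simpa using e
    have e1 := List.append_inj_left' e' (by simp)
    simp only [List.map_eq_append_iff, List.map_eq_cons_iff] at e1
    obtain ⟨p, _, rfl, rfl, a, _, rfl, rfl, b, q, rfl, rfl, rfl⟩ := e1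
    obtain ⟨E, i1, i2, i3⟩ := interp h1 (p.map ty) ([a, b].map ty) (q.map ty) (by simp)
      (by simp) (bal_map_ty _)
    have hE : Sm m B (E.map Prod.fst) := by
      apply sm_interp (l := [a, b]) (fun A hA => hS' A (by simp at hA; rcases hA with h | h <;> simp [h]))
      · intro x
        have := i3 x; have := h4 x
        simp at *; omega
      · exact fun x => (i3 x).1
      · have g1 := i1.gS
        rw [gS_map_ty] at g1
        rw [← g1]
        simp only [List.map_cons, List.map_nil, List.prod_cons, List.prod_nil, mul_one]
        exact hn.trans (max_le (sm_norm (hS' a (by simp))) (sm_norm (hS' b (by simp))))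
    refine ⟨p.map (Ty.map Prod.fst), a.map Prod.fst, b.map Prod.fst, q.map (Ty.map Prod.fst), _,
      by simp, hE, ?_, ?_⟩
    · simpa [symap_comp_ty] using i1.map Prod.fst
    · simpa [symap_comp_ty] using i2.map Prod.fst

theorem complete {m B} (T : PTy → List PTy → Prop)
    (base : ∀ G C, Prv G C → Sm m B C → (∀ A ∈ tys G, Sm m B A) → (tys G).length ≤ 2 →
      T (ul C) ((tys G).map ul))
    (subst : ∀ C P A Q l, T C (P ++ A :: Q) → T A l → T C (P ++ (l ++ Q))) :
    ∀ n G C, G.length ≤ n → Prv G C → Sm m B C → (∀ A ∈ tys G, Sm m B A) →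
      T (ul C) ((tys G).map ul) := by
  intro n
  induction n with
  | zero =>
    intro G C hn h
    exact absurd (List.length_eq_zero_iff.1 (by omega)) h.ne
  | succ n ih =>
    intro G C hn h hC hG
    obtain ⟨K, hK, -⟩ := pprov_of_prv h
    rcases rep_cases hK with ⟨X, i, D, Y, rfl, hD⟩ | hw
    · rcases m with _ | m
      · exact (sm_zero hC).elim
      obtain ⟨E, F, h1, h2, h3, h4, h5⟩ := jager (Sm (m + 1) B)
        (fun A B h => ⟨sm_mono (sm_ldiv h).1, sm_mono (sm_ldiv h).2⟩)
        (fun A B h => ⟨sm_mono (sm_rdiv h).1, sm_mono (sm_rdiv h).2⟩)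
        (fun A B h => ⟨sm_mono (sm_mul h).1, sm_mono (sm_mul h).2⟩)
        (fun i A h => sm_mono (sm_dia h).2)
        (fun i A h => sm_mono (sm_box h).2) h X i D Y rfl hD (fun A hA => hG A (tys_mem.1 hA)) hC
      simp at hn
      simp [tys] at hG
      have t1 := ih _ _ (by simp; omega) h5 hC (by
        intro A hA
        simp [tys] at hA
        rcases hA with hA | rfl | hA
        · exact hG _ (.inl hA)
        · exact h3
        · exact hG _ (.inr (.inr hA)))
      have t2 := ih _ _ (by omega) h1 h2 (fun A hA => hG _ (.inr (.inl hA)))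
      have t3 := base _ _ h4 h3 (by simp [tys, h2]) (by simp [tys])
      simp [tys] at t1 t2 t3 ⊢
      exact subst _ _ _ _ _ t1 (by simpa using subst _ [] _ [] _ t3 t2)
    · generalize tys G = l at hw hG
      subst hw
      simp at hn ⊢
      by_cases hl : l.length ≤ 2
      · simpa using base _ _ h hC (by simpa using hG) (by simpa using hl)
      · rcases pentus h (by omega) hG hC with ⟨p, a, b, q, E, rfl, hE, h1, h2⟩ | ⟨p, a, E, rfl, hE, h1, h2⟩
        · simp at hn hG
          have t1 := ih _ _ (by simp; omega) h2 hC (by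
            intro A hA
            simp only [tys_map_ty] at hA
            simp at hA
            rcases hA with hA | rfl | hA
            · exact hG _ (.inl hA)
            · exact hE
            · exact hG _ (.inr (.inr (.inr hA))))
          have t2 := base _ _ h1 hE (by
            intro A hA
            simp [tys] at hA
            rcases hA with rfl | rfl
            · exact hG _ (.inr (.inl rfl))
            · exact hG _ (.inr (.inr (.inl rfl)))) (by simp [tys])
          rw [tys_map_ty] at t1 t2
          simp at t1 t2 ⊢
          simpa using subst _ _ _ _ _ t1 t2
        · simp at hn hG
          have t1 := ih _ _ (by simpa using by omega) h1 hE (by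
            intro A hA
            simp only [tys_map_ty] at hA
            exact hG _ (.inl hA))
          have t2 := base _ _ h2 hC (by
            intro A hA
            simp [tys] at hA
            rcases hA with rfl | rfl
            · exact hE
            · exact hG _ (.inr rfl)) (by simp [tys])
          rw [tys_map_ty] at t1 t2
          simp at t1 t2 ⊢
          simpa using subst _ [] _ _ _ t2 t1

mutual
theorem repT : ∀ t : PTree, Rep [t] (flatT t)
  | .leaf A => by
    have := Rep.leaf (em A) [] [] Rep.nil
    rw [ul_em] at this
    simpa [flatT] using this
  | .node ts => by
    have := Rep.node 0 ts [] _ [] (repH ts) Rep.nil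
    simpa [flatT] using this
theorem repH : ∀ t : List PTree, Rep t (flatH t)
  | [] => by simpa [flatH] using Rep.nil
  | t :: ts => by simpa [flatH] using (repT t).app (repH ts)
end

theorem tys_split {α : Type} (w : List (Sy α)) : ∀ P B Q, tys w = P ++ B :: Q →
    ∃ X Y, w = X ++ ty B :: Y ∧ tys X = P ∧ tys Y = Q := by
  induction w with
  | nil => intro P B Q h; simp [tys] at h
  | cons x w ih =>
    intro P B Q h
    cases x with
    | ty A =>
      cases P with
      | nil =>
        simp [tys] at h
        exact ⟨[], w, by simp [h.1], rfl, h.2⟩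
      | cons a P =>
        simp [tys] at h
        obtain ⟨X, Y, rfl, rfl, rfl⟩ := ih P B Q h.2
        exact ⟨ty A :: X, Y, rfl, by simp [tys, h.1], rfl⟩
    | op i =>
      obtain ⟨X, Y, rfl, rfl, rfl⟩ := ih P B Q h
      exact ⟨op i :: X, Y, rfl, rfl, rfl⟩
    | cl =>
      obtain ⟨X, Y, rfl, rfl, rfl⟩ := ih P B Q h
      exact ⟨cl :: X, Y, rfl, rfl, rfl⟩

theorem ctx_yield {G : PHedge} {P B Q} (h : yieldHedge G = P ++ B :: Q) :
    ∃ c : PCtx, G = c.plug [.leaf B] ∧ ∀ H, yieldHedge (c.plug H) = P ++ (yieldHedge H ++ Q) := by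
  have h1 := flatH_tys G
  rw [h] at h1
  simp only [List.map_append, List.map_cons] at h1
  obtain ⟨X, Y, e, hX, hY⟩ := tys_split _ _ _ _ h1
  obtain ⟨c, H, rfl, h2, h3⟩ := (repH G).parse X [ty (em B)] Y (by simpa using e) (by simp) (bal_ty _)
  obtain ⟨K, rfl, h4⟩ := h2.cons_ty
  rw [h4.of_nil, ul_em]
  refine ⟨c, rfl, fun H => ?_⟩
  have h5 := (h3 H _ (repH H)).yield
  rw [h5, tys_append, tys_append, hX, hY, flatH_tys]
  simp [Function.comp_def, ul_em]

theorem pprov_id (A : PTy) : PProv [.leaf A] A := by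
  obtain ⟨G, h1, h2⟩ := pprov_of_prv (Prv.idt (em A))
  obtain ⟨K, rfl, h4⟩ := h1.cons_ty
  rw [h4.of_nil, ul_em] at h2
  exact h2

theorem exists_sm (l : List PTy) : ∃ m B, ∀ A ∈ l, Sm m B (em A) := by
  induction l with
  | nil => exact ⟨0, ∅, by simp⟩
  | cons A l ih =>
    obtain ⟨m, B, h⟩ := ih
    refine ⟨max m (em A).ats.length, B ∪ (em A).ats.toFinset, ?_⟩
    intro C hC
    simp only [List.mem_cons] at hC
    rcases hC with rfl | hC
    · exact ⟨by simp, fun a ha => by simp [ha]⟩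
    · exact ⟨(h C hC).1.trans (by simp), fun a ha => by simp [(h C hC).2 a ha]⟩

/-- Rules simulating short provable sequents. -/
def ruleA (Sig : Type) (m : ℕ) (B : Finset ℕ) : Set (ContextFreeRule Sig PTy) :=
  {r | r.input ∈ ul '' {A | Sm m B A} ∧ ∃ l : List PTy, l.length ≤ 2 ∧
    (∀ A ∈ l, A ∈ ul '' {A | Sm m B A}) ∧ r.output = l.map Symbol.nonterminal ∧
    ∃ G, yieldHedge G = l ∧ PProv G r.input}

theorem ruleA_finite (Sig : Type) (m : ℕ) (B : Finset ℕ) : (ruleA Sig m B).Finite := by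
  have hK := (sm_finite m B).image ul
  have hL : ({[]} ∪ ((fun A => [A]) '' (ul '' {A | Sm m B A}) ∪
      Set.image2 (fun A C => [A, C]) (ul '' {A | Sm m B A}) (ul '' {A | Sm m B A})) :
      Set (List PTy)).Finite :=
    (Set.finite_singleton _).union ((hK.image _).union (hK.image2 _ hK))
  refine (hK.image2 (fun A l => (⟨A, l.map Symbol.nonterminal⟩ : ContextFreeRule Sig PTy))
    hL).subset ?_
  rintro ⟨A, o⟩ ⟨h1, l, h2, h3, h4, -⟩
  refine ⟨A, h1, l, ?_, by simp at h4; simp [h4]⟩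
  match l, h2, h3 with
  | [], _, _ => left; rfl
  | [A], _, h3 => right; left; exact ⟨A, h3 A (by simp), rfl⟩
  | [A, C], _, h3 => right; right; exact ⟨A, h3 A (by simp), C, h3 C (by simp), rfl⟩

theorem allrules_finite {Sig : Type} (I : Finset (Sig × PTy)) (m : ℕ) (B : Finset ℕ) :
    (ruleA Sig m B ∪ (fun x : Sig × PTy => (⟨x.2, [Symbol.terminal x.1]⟩ :
      ContextFreeRule Sig PTy)) '' (I : Set (Sig × PTy))).Finite :=
  (ruleA_finite Sig m B).union (I.finite_toSet.image _)

/-- The context-free grammar. -/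
noncomputable abbrev cfg {Sig : Type} (I : Finset (Sig × PTy)) (Dt : PTy) (m : ℕ) (B : Finset ℕ) :
    ContextFreeGrammar Sig where
  NT := PTy
  initial := Dt
  rules := (allrules_finite I m B).toFinset

/-- Matching of grammar symbols and types. -/
def Mt {Sig : Type} (I : Finset (Sig × PTy)) : Symbol Sig PTy → PTy → Prop
  | .terminal a, B => (a, B) ∈ I
  | .nonterminal A, B => A = B

theorem forall2_split {α β : Type} {R : α → β → Prop} (p : List α) : ∀ x q l,
    List.Forall₂ R (p ++ x :: q) l →
    ∃ P y Q, l = P ++ y :: Q ∧ List.Forall₂ R p P ∧ R x y ∧ List.Forall₂ R q Q := by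
  induction p with
  | nil =>
    intro x q l h
    cases h with
    | cons h1 h2 => exact ⟨[], _, _, rfl, .nil, h1, h2⟩
  | cons a p ih =>
    intro x q l h
    cases h with
    | cons h1 h2 =>
      obtain ⟨P, y, Q, rfl, h3, h4, h5⟩ := ih _ _ _ h2
      exact ⟨_ :: P, y, Q, rfl, .cons h1 h3, h4, h5⟩

theorem forall2_app {α β : Type} {R : α → β → Prop} {p P} (h : List.Forall₂ R p P) {q Q}
    (h' : List.Forall₂ R q Q) : List.Forall₂ R (p ++ q) (P ++ Q) := by
  induction h with
  | nil => exact h'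
  | cons h1 _ ih => exact .cons h1 ih

theorem mt_nt {Sig : Type} (I : Finset (Sig × PTy)) (l : List PTy) :
    List.Forall₂ (Mt I) (l.map Symbol.nonterminal) l := by
  induction l with
  | nil => exact .nil
  | cons A l ih => exact .cons rfl ih

theorem mt_term {Sig : Type} (I : Finset (Sig × PTy)) (w : List Sig) : ∀ l,
    List.Forall₂ (Mt I) (w.map Symbol.terminal) l →
    ∃ k : List (Sig × PTy), (∀ x ∈ k, x ∈ I) ∧ w = k.map Prod.fst ∧ l = k.map Prod.snd := by
  induction w with
  | nil => intro l h; cases h; exact ⟨[], by simp⟩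
  | cons a w ih =>
    intro l h
    cases h with
    | cons h1 h2 =>
      obtain ⟨k, h3, rfl, rfl⟩ := ih _ h2
      exact ⟨(a, _) :: k, by simpa using ⟨h1, fun a b h => h3 _ h⟩, rfl, rfl⟩

theorem cfg_sound {Sig : Type} (I : Finset (Sig × PTy)) (Dt : PTy) (m : ℕ) (B : Finset ℕ)
    (s : List (Symbol Sig PTy)) (h : (cfg I Dt m B).Derives [Symbol.nonterminal Dt] s) :
    ∃ G, PProv G Dt ∧ List.Forall₂ (Mt I) s (yieldHedge G) := by
  induction h with
  | refl => exact ⟨[.leaf Dt], pprov_id Dt, mt_nt I [Dt]⟩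
  | tail _ hp ih =>
    obtain ⟨G, h1, h2⟩ := ih
    obtain ⟨r, hr, hrw⟩ := hp
    obtain ⟨p, q, rfl, rfl⟩ := hrw.exists_parts
    simp only [List.append_assoc, List.singleton_append] at h2
    obtain ⟨P, y, Q, e, h3, h4, h5⟩ := forall2_split _ _ _ _ h2
    obtain rfl : r.input = y := h4
    have hr' := (Set.Finite.mem_toFinset _).1 hr
    rcases hr' with ⟨-, l, -, -, ho, K, hK, hK'⟩ | ⟨⟨a, A⟩, ha, rfl⟩
    · obtain ⟨c, rfl, hc⟩ := ctx_yield e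
      refine ⟨c.plug K, PProv.cut K c _ _ hK' h1, ?_⟩
      rw [hc, hK, ho, List.append_assoc]
      exact forall2_app h3 (forall2_app (mt_nt I l) h5)
    · refine ⟨G, h1, ?_⟩
      rw [e]
      simp only [List.append_assoc, List.singleton_append]
      have ha' : Mt I (Symbol.terminal a) A := ha
      exact forall2_app h3 (.cons ha' h5)

theorem cfg_term {Sig : Type} (I : Finset (Sig × PTy)) (Dt : PTy) (m : ℕ) (B : Finset ℕ)
    (l : List (Sig × PTy)) (h : ∀ x ∈ l, x ∈ I) :
    (cfg I Dt m B).Derives ((l.map Prod.snd).map Symbol.nonterminal)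
      ((l.map Prod.fst).map Symbol.terminal) := by
  induction l with
  | nil => exact .refl _
  | cons x l ih =>
    have h1 : (cfg I Dt m B).Derives [Symbol.nonterminal x.2] [Symbol.terminal x.1] := by
      apply ContextFreeGrammar.Produces.single
      refine ⟨⟨x.2, [Symbol.terminal x.1]⟩, ?_, ContextFreeRule.Rewrites.input_output⟩
      exact (Set.Finite.mem_toFinset _).2 (.inr ⟨x, h x (by simp), rfl⟩)
    have h2 := ih (fun y hy => h y (by simp [hy]))
    exact (h1.append_right _).trans (h2.append_left [Symbol.terminal x.1])

theorem cfg_complete {Sig : Type} (I : Finset (Sig × PTy)) (Dt : PTy) (m : ℕ) (B : Finset ℕ)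
    (G : PHedge) (hG : PProv G Dt) (hD : Sm m B (em Dt))
    (hS : ∀ A ∈ yieldHedge G, Sm m B (em A)) :
    (cfg I Dt m B).Derives [Symbol.nonterminal Dt] ((yieldHedge G).map Symbol.nonterminal) := by
  have h := complete (m := m) (B := B)
    (fun C l => (cfg I Dt m B).Derives [Symbol.nonterminal C] (l.map Symbol.nonterminal))
    (by
      intro G C h hC hG hl
      obtain ⟨K, h1, h2⟩ := pprov_of_prv h
      apply ContextFreeGrammar.Produces.single
      refine ⟨⟨ul C, ((tys G).map ul).map Symbol.nonterminal⟩, ?_,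
        ContextFreeRule.Rewrites.input_output⟩
      refine (Set.Finite.mem_toFinset _).2 (.inl ⟨⟨C, hC, rfl⟩, _, by simpa using hl, ?_, rfl,
        K, h1.yield, h2⟩)
      intro A hA
      obtain ⟨A', hA', rfl⟩ := List.mem_map.1 hA
      exact ⟨A', hG A' hA', rfl⟩)
    (by
      intro C P A Q l h1 h2
      refine h1.trans ?_
      have := (h2.append_right (Q.map Symbol.nonterminal)).append_left (P.map Symbol.nonterminal)
      simp only [List.map_append, List.map_cons]
      exact this)
    _ (flatH G) (em Dt) le_rfl (prv_of_pprov hG) hD (by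
      intro A hA
      rw [flatH_tys] at hA
      obtain ⟨A', hA', rfl⟩ := List.mem_map.1 hA
      exact hS A' hA')
  rw [ul_em, flatH_tys] at h
  simpa only [List.map_map, Function.comp_def, ul_em, List.map_id'] using h

theorem main {Sig : Type} (I : Finset (Sig × PTy)) (Dt : PTy) :
    (grammarLang I Dt).IsContextFree := by
  obtain ⟨m, B, h⟩ := exists_sm (Dt :: I.toList.map Prod.snd)
  refine ⟨cfg I Dt m B, ?_⟩
  ext w
  constructor
  · intro hw
    obtain ⟨G, h1, h2⟩ := cfg_sound I Dt m B _ hw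
    obtain ⟨k, h3, rfl, h4⟩ := mt_term I w _ h2
    exact ⟨G, k, h1, h3, rfl, h4⟩
  · rintro ⟨G, l, h1, h2, rfl, h3⟩
    have h4 := cfg_complete I Dt m B G h1 (h _ (by simp)) (by
      intro A hA
      rw [h3] at hA
      obtain ⟨x, hx, rfl⟩ := List.mem_map.1 hA
      exact h _ (List.mem_cons_of_mem _ (List.mem_map_of_mem (by simpa using h2 x hx))))
    rw [h3] at h4
    exact h4.trans (cfg_term I Dt m B l h2)

end LD

/-- Every language recognized by an L◇ grammar is context-free. -/
theorem LDiamond_recognizable_is_context_free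
    {Sig : Type} [Fintype Sig] [DecidableEq Sig]
    (I : Finset (Sig × PTy)) (Dt : PTy) :
    (grammarLang I Dt).IsContextFree := by
  exact LD.main I Dt
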